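/- Let f : X → S be a surjective projective morphism of Noetherian schemes of pure relative dimension d ≥ 1 with S affine, and let L be an f-very ample invertible O_X-module. Then there exists an integer n₀ > 0 such that for all n ≥ n₀ there is a regular global section s of L^{⊗n} with Z(s) → S of pure relative dimension d − 1. -/

import Mathlib

open AlgebraicGeometry CategoryTheory Opposite TopologicalSpace
open scoped TensorProduct

namespace Paper

/-- Restriction of a section of the structure sheaf to a smaller open subset. -/
noncomputable def res (X : Scheme) {U V : X.Opens} (h : V ≤ U) (a : Γ(X, U)) : Γ(X, V) :=
  X.presheaf.map (homOfLE h).op a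

/-- An invertible `O_X`-module (line bundle) presented by a trivializing open cover and a
multiplicative cocycle of transition functions. -/
structure LineBundle (X : Scheme) where
  ι : Type
  U : ι → X.Opens
  covers : ∀ x : X, ∃ i, x ∈ U i
  g : ∀ i j : ι, Γ(X, U i ⊓ U j)
  isUnit : ∀ i j, IsUnit (g i j)
  cocycle : ∀ i j k : ι,
    res X (inf_le_left : U i ⊓ U j ⊓ U k ≤ U i ⊓ U j) (g i j) *
      res X (le_inf (inf_le_left.trans inf_le_right) inf_le_right :
        U i ⊓ U j ⊓ U k ≤ U j ⊓ U k) (g j k) =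
    res X (le_inf (inf_le_left.trans inf_le_left) inf_le_right :
        U i ⊓ U j ⊓ U k ≤ U i ⊓ U k) (g i k)

/-- A global section of a line bundle, given in the trivializations. -/
structure LineBundle.GSection {X : Scheme} (L : LineBundle X) where
  s : ∀ i, Γ(X, L.U i)
  compat : ∀ i j, res X inf_le_left (s i) = L.g i j * res X inf_le_right (s j)

/-- A section is regular if multiplication by it is injective, i.e. all its germs are
nonzerodivisors in the stalks. -/
def LineBundle.GSection.IsRegular {X : Scheme} {L : LineBundle X} (t : L.GSection) : Prop :=
  ∀ (i : L.ι) (x : X) (hx : x ∈ L.U i),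
    X.presheaf.germ (L.U i) x hx (t.s i) ∈ nonZeroDivisors (X.presheaf.stalk x)

/-- The zero locus of a section of a line bundle. -/
def LineBundle.GSection.zeroLocus {X : Scheme} {L : LineBundle X} (t : L.GSection) : Set X :=
  {x : X | ∀ (i : L.ι) (hx : x ∈ L.U i),
    ¬ IsUnit (X.presheaf.germ (L.U i) x hx (t.s i))}

/-- An isomorphism of line bundles, given by comparing trivializations. -/
structure LineBundle.Iso {X : Scheme} (L M : LineBundle X) where
  t : ∀ (i : L.ι) (a : M.ι), Γ(X, L.U i ⊓ M.U a)
  isUnit : ∀ i a, IsUnit (t i a)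
  compat : ∀ (i j : L.ι) (a b : M.ι),
    res X (inf_le_left : (L.U i ⊓ M.U a) ⊓ (L.U j ⊓ M.U b) ≤ L.U i ⊓ M.U a) (t i a) *
      res X (le_inf (inf_le_left.trans inf_le_left) (inf_le_right.trans inf_le_left) :
        (L.U i ⊓ M.U a) ⊓ (L.U j ⊓ M.U b) ≤ L.U i ⊓ L.U j) (L.g i j) =
    res X (le_inf (inf_le_left.trans inf_le_right) (inf_le_right.trans inf_le_right) :
        (L.U i ⊓ M.U a) ⊓ (L.U j ⊓ M.U b) ≤ M.U a ⊓ M.U b) (M.g a b) *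
      res X (inf_le_right : (L.U i ⊓ M.U a) ⊓ (L.U j ⊓ M.U b) ≤ L.U j ⊓ M.U b) (t j b)


/-- `f` is of pure relative dimension `d`: every irreducible component of every
(set-theoretic) fiber of `f` has dimension `d`. -/
def PureRelativeDimension {X S : Scheme} (f : X ⟶ S) (d : ℕ) : Prop :=
  ∀ s : S, ∀ C ∈ irreducibleComponents (↥(f.base ⁻¹' {s} : Set X)),
    topologicalKrullDim (↥C) = (d : WithBot ℕ∞)

/-- A global section of the `n`-th tensor power `L^{⊗n}` over the open subset `V`,
presented in the trivializations of `L`. -/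
structure LineBundle.PowSectionOn {X : Scheme} (L : LineBundle X) (n : ℕ) (V : X.Opens) where
  s : ∀ i : L.ι, Γ(X, V ⊓ L.U i)
  compat : ∀ i j : L.ι,
    res X (le_inf inf_le_left (inf_le_right.trans inf_le_left) :
        V ⊓ (L.U i ⊓ L.U j) ≤ V ⊓ L.U i) (s i) =
      res X (inf_le_right : V ⊓ (L.U i ⊓ L.U j) ≤ L.U i ⊓ L.U j) (L.g i j) ^ n *
        res X (le_inf inf_le_left (inf_le_right.trans inf_le_right) :
          V ⊓ (L.U i ⊓ L.U j) ≤ V ⊓ L.U j) (s j)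

/-- The locus where a section of `L^{⊗n}` over `V` is invertible. -/
def LineBundle.PowSectionOn.unitLocus {X : Scheme} {L : LineBundle X} {n : ℕ} {V : X.Opens}
    (t : L.PowSectionOn n V) : Set X :=
  {x : X | ∃ (i : L.ι) (h1 : x ∈ V) (h2 : x ∈ L.U i),
    IsUnit (X.presheaf.germ (V ⊓ L.U i) x ⟨h1, h2⟩ (t.s i))}

/-- The zero locus of a section of `L^{⊗n}` over `V`. -/
def LineBundle.PowSectionOn.zeroLocus {X : Scheme} {L : LineBundle X} {n : ℕ} {V : X.Opens}
    (t : L.PowSectionOn n V) : Set X :=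
  {x : X | x ∈ V ∧ ∀ (i : L.ι) (h1 : x ∈ V) (h2 : x ∈ L.U i),
    ¬ IsUnit (X.presheaf.germ (V ⊓ L.U i) x ⟨h1, h2⟩ (t.s i))}

/-- A section of `L^{⊗n}` over `V` is regular if all of its germs are nonzerodivisors. -/
def LineBundle.PowSectionOn.IsRegular {X : Scheme} {L : LineBundle X} {n : ℕ} {V : X.Opens}
    (t : L.PowSectionOn n V) : Prop :=
  ∀ (i : L.ι) (x : X) (h1 : x ∈ V) (h2 : x ∈ L.U i),
    X.presheaf.germ (V ⊓ L.U i) x ⟨h1, h2⟩ (t.s i) ∈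
      nonZeroDivisors (X.presheaf.stalk x)

/-- `L` is relatively ample for `f : X → S`: each point of `X` has an affine open
neighbourhood of the form `X_t` (the invertibility locus of a section `t` of a positive
power of `L` over the preimage of an affine open of `S`). -/
def IsRelativelyAmple {X S : Scheme} (f : X ⟶ S) (L : LineBundle X) : Prop :=
  ∀ x : X, ∃ W : S.Opens, IsAffineOpen W ∧ f.base x ∈ W ∧
    ∃ n : ℕ, 0 < n ∧ ∃ t : L.PowSectionOn n (f ⁻¹ᵁ W),
      ∃ ho : IsOpen t.unitLocus, x ∈ t.unitLocus ∧ IsAffineOpen ⟨t.unitLocus, ho⟩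

/-- A projective morphism: a proper morphism admitting a relatively ample invertible
module. -/
def IsProjectiveMorphism {X S : Scheme} (f : X ⟶ S) : Prop :=
  IsProper f ∧ ∃ L : LineBundle X, IsRelativelyAmple f L

/-!
A section that vanishes at none of the finitely many associated points of `X` is regular, and by
Krull's Hauptidealsatz a section that vanishes at no generic point of a fibre cuts every component
of every fibre in pure dimension `d - 1`. The difficulty is that there may be infinitely many
generic points of fibres.

Call an element of the residue field `κ(x)` constant if it is algebraic over `κ(f x)`. Generic
going-down and Noetherian induction show that, for sections `P`, `F` of the same degree and `G` of
`b` times that degree, once `n` is large the element `(P / F) ^ n + G / F ^ b` can be constant at a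
generic point of a fibre only if `P / F` already is. Applied to the generating sections one after
the other, this yields a `G` such that `G / F ^ b` is constant at no generic point of a fibre: since
`d ≥ 1`, properness and ampleness ensure that at each of them some ratio of generating sections is
not constant. Then `H = P ^ n + F ^ (n - b) * G` vanishes at no such point with `F ≠ 0`, for
otherwise `P / F`, and with it `G / F ^ b`, would be constant there; nor does it vanish where
`F = 0` and `P ≠ 0`. So the non-vanishing locus can be enlarged step by step. This gives sections in
some degree `2 ^ i` and in some degree `3 ^ j`, whose monomials reach every large degree.
-/

/-! ### Generic going-down -/

section GoingDown

/-- Going-down for the `R`-algebra `B` at the primes not containing `φ`, i.e. over the basic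
open set `D(φ)` of `Spec B`. -/
def GoesDownAway (R : Type*) {B : Type*} [CommRing R] [CommRing B] [Algebra R B] (φ : B) : Prop :=
  ∀ q : Ideal B, q.IsPrime → φ ∉ q → ∀ p : Ideal R, p.IsPrime → p ≤ q.under R →
    ∃ q₁ ≤ q, q₁.IsPrime ∧ q₁.under R = p

lemma exists_flat_localizationAway_of_finite (R B : Type*) [CommRing R] [CommRing B]
    [Algebra R B] [IsDomain R] [IsNoetherianRing R] [Module.Finite R B] :
    ∃ r : R, r ≠ 0 ∧ Module.Flat R (Localization.Away (algebraMap R B r)) := by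
  have : Module.FinitePresentation R B := Module.finitePresentation_of_finite R B
  obtain ⟨r, hr, hfree, -⟩ := Module.FinitePresentation.exists_free_localizedModule_powers
    (nonZeroDivisors R) (LocalizedModule.mkLinearMap (nonZeroDivisors R) B) (FractionRing R)
  have hflat : Module.Flat R (LocalizedModule.Away r B) :=
    Module.Flat.trans R (Localization (.powers r)) _
  let toAway := (IsScalarTower.toAlgHom R B (Localization.Away (algebraMap R B r))).toLinearMap
  have : IsLocalizedModule (Submonoid.powers r) toAway := by
    rw [isLocalizedModule_iff_isLocalization, Algebra.algebraMapSubmonoid_powers]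
    infer_instance
  exact ⟨r, nonZeroDivisors.ne_zero hr,
    Module.Flat.of_linearEquiv (IsLocalizedModule.iso (.powers r) toAway).symm⟩

section Basic

variable {R B C : Type*} [CommRing R] [CommRing B] [CommRing C] [Algebra R B] [Algebra B C]
  [Algebra R C] [IsScalarTower R B C]

lemma GoesDownAway.of_flat (φ : B) [Module.Flat R (Localization.Away φ)] :
    GoesDownAway R φ := by
  intro q hq hφ p hp hle
  have hdisj : Disjoint (Submonoid.powers φ : Set B) (q : Set B) :=
    (Ideal.disjoint_powers_iff_notMem φ hq.isRadical).mpr hφ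
  let Q : Ideal (Localization.Away φ) := q.map (algebraMap B _)
  have : Q.IsPrime := IsLocalization.isPrime_of_isPrime_disjoint (.powers φ) _ q hq hdisj
  have hQq : Q.under B = q :=
    IsLocalization.under_map_of_isPrime_disjoint (.powers φ) _ hq hdisj
  have : Q.LiesOver (q.under R) := ⟨by rw [← hQq, Ideal.under_under]⟩
  obtain ⟨P, hPQ, hP, hPp⟩ :=
    Ideal.exists_ideal_le_liesOver_of_le (p := p) (q := q.under R) Q hle
  refine ⟨P.under B, hQq ▸ Ideal.comap_mono hPQ, inferInstance, ?_⟩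
  rw [Ideal.under_under, ← hPp.over]

lemma GoesDownAway.trans {φ : B} {ψ : C} (hφ : GoesDownAway R φ) (hψ : GoesDownAway B ψ) :
    GoesDownAway R (algebraMap B C φ * ψ) := by
  intro q hq hmul p hp hle
  obtain ⟨q₁, hq₁q, hq₁, hq₁p⟩ := hφ (q.under B) inferInstance
    (fun h => hmul (q.mul_mem_right _ h)) p hp (by rwa [Ideal.under_under])
  obtain ⟨q₂, hq₂q, hq₂, hq₂q₁⟩ :=
    hψ q hq (fun h => hmul (q.mul_mem_left _ h)) q₁ hq₁ hq₁q
  exact ⟨q₂, hq₂q, hq₂, by rw [← Ideal.under_under (B := B), hq₂q₁, hq₁p]⟩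

lemma isLocalizationAway_localizationAway [IsDomain C] [FaithfulSMul B C] {y : B} (hy : y ≠ 0)
    (hpow : ∀ c : C, ∃ (n : ℕ) (b : B), algebraMap B C b = algebraMap B C y ^ n * c) :
    IsLocalization.Away y (Localization.Away (algebraMap B C y)) := by
  set y' := algebraMap B C y with hy'
  have hy'_ne : y' ≠ 0 := by simpa [hy'] using hy
  have hmap (b : B) : algebraMap B (Localization.Away y') b = algebraMap C _ (algebraMap B C b) :=
    IsScalarTower.algebraMap_apply B C _ b
  refine ⟨⟨?_, fun z => ?_, fun {a b} hab => ⟨1, ?_⟩⟩⟩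
  · rintro ⟨_, n, rfl⟩
    rw [hmap, map_pow]
    exact IsLocalization.map_units (M := .powers y') _ ⟨y' ^ n, n, rfl⟩
  · obtain ⟨⟨c, ⟨_, m, rfl⟩⟩, hc⟩ := IsLocalization.surj (Submonoid.powers y') z
    obtain ⟨n, b, hb⟩ := hpow c
    refine ⟨(b, ⟨_, n + m, rfl⟩), ?_⟩
    simp only [hmap] at hc ⊢
    rw [hb, map_pow, ← hy', pow_add, map_mul, map_mul, ← hc]
    ring
  · rw [hmap, hmap] at hab
    have := IsLocalization.injective (M := Submonoid.powers y') (Localization.Away y')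
      (powers_le_nonZeroDivisors_of_noZeroDivisors hy'_ne) hab
    simpa using FaithfulSMul.algebraMap_injective B C this

lemma GoesDownAway.of_forall_exists_pow_mul [IsDomain C] [FaithfulSMul B C] {y : B} (hy : y ≠ 0)
    (hpow : ∀ c : C, ∃ (n : ℕ) (b : B), algebraMap B C b = algebraMap B C y ^ n * c) :
    GoesDownAway B (algebraMap B C y) := by
  have := isLocalizationAway_localizationAway hy hpow
  have : Module.Flat B (Localization.Away (algebraMap B C y)) :=
    IsLocalization.flat _ (Submonoid.powers y)
  exact .of_flat _

end Basic

section Generic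

variable {R R' B : Type*} [CommRing R] [CommRing R'] [CommRing B] [Algebra R R'] [Algebra R B]
  [Algebra R' B] [IsScalarTower R R' B]

lemma exists_pow_mul_mem_adjoin_smul {s : Set B} (hs : Algebra.adjoin R s = ⊤) (y : R') (b : B) :
    ∃ n : ℕ, algebraMap R' B y ^ n * b ∈ Algebra.adjoin R' ((y • ·) '' s) := by
  set B' := Algebra.adjoin R' ((y • ·) '' s)
  set y' := algebraMap R' B y
  have hy' (n : ℕ) : y' ^ n ∈ B' := B'.pow_mem (B'.algebraMap_mem y) n
  have hb : b ∈ Algebra.adjoin R s := hs ▸ trivial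
  induction hb using Algebra.adjoin_induction with
  | mem x hx => exact ⟨1, Algebra.subset_adjoin ⟨x, hx, by simp [y', Algebra.smul_def]⟩⟩
  | algebraMap a =>
    refine ⟨0, ?_⟩
    simpa [← IsScalarTower.algebraMap_apply R R' B] using B'.algebraMap_mem (algebraMap R R' a)
  | add x z _ _ hx hz =>
    obtain ⟨n, hn⟩ := hx
    obtain ⟨m, hm⟩ := hz
    refine ⟨n + m, ?_⟩
    rw [show y' ^ (n + m) * (x + z) = y' ^ m * (y' ^ n * x) + y' ^ n * (y' ^ m * z) by ring]
    exact B'.add_mem (B'.mul_mem (hy' m) hn) (B'.mul_mem (hy' n) hm)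
  | mul x z _ _ hx hz =>
    obtain ⟨n, hn⟩ := hx
    obtain ⟨m, hm⟩ := hz
    refine ⟨n + m, ?_⟩
    rw [show y' ^ (n + m) * (x * z) = (y' ^ n * x) * (y' ^ m * z) by ring]
    exact B'.mul_mem hn hm

lemma exists_goesDownAway_of_isAlgebraic (R : Type*) [CommRing R] [Algebra R B]
    [IsNoetherianRing R] [IsDomain B] [FaithfulSMul R B]
    [Algebra.FiniteType R B] [Algebra.IsAlgebraic R B] :
    ∃ φ : B, φ ≠ 0 ∧ GoesDownAway R φ := by
  have : IsDomain R := (FaithfulSMul.algebraMap_injective R B).isDomain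
  obtain ⟨s, hs⟩ := (Algebra.FiniteType.out : (⊤ : Subalgebra R B).FG)
  obtain ⟨y, hy, hys⟩ := Algebra.IsAlgebraic.exists_integral_multiples R s
  let B' : Subalgebra R B := Algebra.adjoin R ((y • ·) '' (s : Set B))
  have : Module.Finite R B' := by
    refine (Module.Finite.iff_fg (N := Subalgebra.toSubmodule B')).mpr
      (fg_adjoin_of_finite (s.finite_toSet.image _) ?_)
    rintro _ ⟨z, hz, rfl⟩
    exact hys z hz
  obtain ⟨r, hr, hflat⟩ := exists_flat_localizationAway_of_finite R B'
  have hyB' : algebraMap R B' y ≠ 0 := by simpa using hy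
  have hdown : GoesDownAway B' (algebraMap B' B (algebraMap R B' y)) :=
    .of_forall_exists_pow_mul hyB' fun b => by
      obtain ⟨n, hn⟩ := exists_pow_mul_mem_adjoin_smul hs y b
      exact ⟨n, ⟨_, hn⟩, rfl⟩
  refine ⟨_, mul_ne_zero ?_ ?_, (GoesDownAway.of_flat (algebraMap R B' r)).trans hdown⟩
  · simpa [← IsScalarTower.algebraMap_apply R B' B] using hr
  · simpa [← IsScalarTower.algebraMap_apply R B' B] using hy

theorem exists_goesDownAway (R B : Type*) [CommRing R] [CommRing B] [Algebra R B] [IsDomain B]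
    [IsNoetherianRing R] [FaithfulSMul R B] [Algebra.FiniteType R B] :
    ∃ φ : B, φ ≠ 0 ∧ GoesDownAway R φ := by
  have : IsDomain R := (FaithfulSMul.algebraMap_injective R B).isDomain
  obtain ⟨s, hs⟩ := (Algebra.FiniteType.out : (⊤ : Subalgebra R B).FG)
  have : Algebra.IsAlgebraic (Algebra.adjoin R (s : Set B)) B := by
    rw [hs]
    exact ⟨fun x => isAlgebraic_algebraMap (⟨x, trivial⟩ : (⊤ : Subalgebra R B))⟩
  obtain ⟨t, hts, ht⟩ := exists_isTranscendenceBasis_subset (R := R) (s : Set B)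
  have : Finite t := (s.finite_toSet.subset hts).to_subtype
  let R' := Algebra.adjoin R (Set.range ((↑) : t → B))
  let e : MvPolynomial t R ≃ₐ[R] R' := ht.1.aevalEquiv
  have : Algebra.IsAlgebraic R' B := ht.isAlgebraic
  have : Module.Flat R R' := Module.Flat.of_linearEquiv e.toLinearEquiv.symm
  have : IsNoetherianRing R' := isNoetherianRing_of_ringEquiv _ e.toRingEquiv
  have : Algebra.FiniteType R' B := Algebra.FiniteType.of_restrictScalars_finiteType R _ _
  have : Module.Flat R' (Localization.Away (1 : R')) :=
    IsLocalization.flat _ (Submonoid.powers (1 : R'))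
  have : Module.Flat R (Localization.Away (1 : R')) := Module.Flat.trans R R' _
  obtain ⟨φ, hφ, hdown⟩ := exists_goesDownAway_of_isAlgebraic (B := B) R'
  exact ⟨_, by simpa using hφ, (GoesDownAway.of_flat (1 : R')).trans hdown⟩

end Generic

end GoingDown

/-! ### Algebraicity of `u ^ n + g` at generic points of fibres -/

section AlgebraicModulo

open Polynomial

lemma eval_ne_zero_of_natDegree_coeff_lt {E : Type*} [CommRing E] [IsDomain E] {T : E[X]}
    {Q : E[X][X]} (hQ : Q ≠ 0) (hdeg : ∀ i, (Q.coeff i).natDegree < T.natDegree) :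
    Q.eval T ≠ 0 := by
  intro h
  obtain ⟨R, rfl⟩ := dvd_iff_isRoot.mpr h
  have hT : T ≠ 0 := by rintro rfl; simpa using hdeg 0
  have htrail : (X - C T).trailingCoeff = -T := by
    rw [trailingCoeff_eq_coeff_zero] <;> simp [hT]
  have hdvd : T ∣ ((X - C T) * R).trailingCoeff := by
    rw [trailingCoeff_mul, htrail]
    exact (dvd_neg.mpr dvd_rfl).mul_right _
  exact (natDegree_le_of_dvd hdvd (trailingCoeff_nonzero_iff_nonzero.mpr hQ)).not_gt (hdeg _)

/-- If `u ^ n + g = w` is algebraic, then substituting `g = w - u ^ n` in a relation of degree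
less than `n` in `u` leaves a nontrivial relation for `u`. -/
lemma isAlgebraic_of_isAlgebraic_pow_add {k D : Type*} [CommRing k] [CommRing D] [IsDomain k]
    [IsDomain D] [Algebra k D] [FaithfulSMul k D] {u g : D} {Φ : k[X][X]} (hΦ : Φ ≠ 0)
    (hroot : Φ.eval₂ (aeval u : k[X] →ₐ[k] D).toRingHom g = 0) {n : ℕ}
    (hn : ∀ i, (Φ.coeff i).natDegree < n) (halg : IsAlgebraic k (u ^ n + g)) :
    IsAlgebraic k u := by
  let E := Subalgebra.algebraicClosure k D
  by_contra hu
  have huE : Transcendental E u := fun h => hu (h.restrictScalars k)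
  let w : E := ⟨u ^ n + g, halg⟩
  let T : E[X] := C w - X ^ n
  have hT : T.natDegree = n := by
    rw [show T = -(X ^ n - C w) from (neg_sub _ _).symm, natDegree_neg, natDegree_X_pow_sub_C]
  let Q : E[X][X] := Φ.map (mapRingHom (algebraMap k E))
  have hQ : Q ≠ 0 := (Polynomial.map_ne_zero_iff
    (map_injective _ (FaithfulSMul.algebraMap_injective k E))).mpr hΦ
  have hQT : Q.eval T ≠ 0 := eval_ne_zero_of_natDegree_coeff_lt hQ fun i => by
    rw [hT, coeff_map, coe_mapRingHom]
    exact natDegree_map_le.trans_lt (hn i)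
  refine huE ⟨Q.eval T, hQT, ?_⟩
  have hTg : aeval u T = g := by simp [T, w]
  have hsubst : aeval u (Q.eval T) = Q.eval₂ (aeval u : E[X] →ₐ[E] D).toRingHom (aeval u T) :=
    hom_eval₂ Q (RingHom.id _) (aeval u : E[X] →ₐ[E] D).toRingHom T
  rw [hsubst, hTg, eval₂_map, ← hroot]
  congr 1
  ext <;> simp

section Definitions

variable (A : Type*) {B : Type*} [CommRing A] [CommRing B] [Algebra A B]

/-- The prime `q` of `B` is a generic point of its fibre over `Spec A`. -/
def IsMinimalInFibre (q : Ideal B) : Prop :=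
  q ∈ ((q.under A).map (algebraMap A B)).minimalPrimes

/-- The class of `b` modulo `q` is algebraic over the image of `A`; phrased with polynomials
over `A` itself so that it transports easily along ring homomorphisms. -/
def IsAlgebraicModulo (q : Ideal B) (b : B) : Prop :=
  ∃ p : A[X], (∃ i, algebraMap A B (p.coeff i) ∉ q) ∧ aeval b p ∈ q

variable {A}

lemma IsMinimalInFibre.eq_of_le {q q' : Ideal B} (hq : IsMinimalInFibre A q) (hq' : q'.IsPrime)
    (hle : q' ≤ q) (hunder : q.under A ≤ q'.under A) : q' = q :=
  hle.antisymm (hq.2 ⟨hq', Ideal.map_le_iff_le_comap.mpr hunder⟩ hle)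

lemma isMinimalInFibre_iff {q : Ideal B} :
    IsMinimalInFibre A q ↔
      q.IsPrime ∧ ∀ q' : Ideal B, q'.IsPrime → q' ≤ q → q.under A ≤ q'.under A → q' = q := by
  refine ⟨fun hq => ⟨hq.1.1, fun q' hq' => hq.eq_of_le hq'⟩, fun ⟨hq, hmin⟩ => ?_⟩
  refine ⟨⟨hq, Ideal.map_comap_le⟩, fun q' hq' hle => (hmin q' hq'.1 hle ?_).ge⟩
  exact Ideal.map_le_iff_le_comap.mp hq'.2

lemma isAlgebraicModulo_iff_isAlgebraic {q : Ideal B} {b : B} :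
    IsAlgebraicModulo A q b ↔ IsAlgebraic (A ⧸ q.under A) (Ideal.Quotient.mk q b) := by
  have haeval (p : A[X]) : aeval (Ideal.Quotient.mk q b) (p.map (Ideal.Quotient.mk (q.under A))) =
      Ideal.Quotient.mk q (aeval b p) := by
    rw [aeval_def, eval₂_map, aeval_def, hom_eval₂]
    rfl
  have hne (p : A[X]) : p.map (Ideal.Quotient.mk (q.under A)) ≠ 0 ↔
      ∃ i, algebraMap A B (p.coeff i) ∉ q := by
    simp [Polynomial.ext_iff, Ideal.Quotient.eq_zero_iff_mem, Ideal.mem_comap]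
  rw [IsAlgebraic, (Polynomial.map_surjective _ Ideal.Quotient.mk_surjective).exists]
  simp only [IsAlgebraicModulo, hne, haeval, Ideal.Quotient.eq_zero_iff_mem]

end Definitions

section Transfer

variable {A A' B B' : Type*} [CommRing A] [CommRing A'] [CommRing B] [CommRing B'] [Algebra A B]
  [Algebra A A'] [Algebra A' B'] [Algebra A B'] [IsScalarTower A A' B']

lemma isAlgebraicModulo_comap_iff (hA : Function.Surjective (algebraMap A A')) (π : B →ₐ[A] B')
    {q : Ideal B'} {b : B} :
    IsAlgebraicModulo A (q.comap π) b ↔ IsAlgebraicModulo A' q (π b) := by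
  simp only [IsAlgebraicModulo, (Polynomial.map_surjective _ hA).exists, coeff_map,
    aeval_map_algebraMap, aeval_algHom_apply, Ideal.mem_comap, AlgHom.commutes,
    ← IsScalarTower.algebraMap_apply]

lemma IsMinimalInFibre.of_comap {π : B →ₐ[A] B'} (hπ : Function.Surjective π) {q : Ideal B'}
    (hq : q.IsPrime) (h : IsMinimalInFibre A (q.comap π)) : IsMinimalInFibre A' q := by
  refine isMinimalInFibre_iff.mpr ⟨hq, fun q' hq' hle hunder => ?_⟩
  refine Ideal.comap_injective_of_surjective _ hπ
    (h.eq_of_le inferInstance (Ideal.comap_mono hle) fun a ha => ?_)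
  have hmap : π (algebraMap A B a) = algebraMap A' B' (algebraMap A A' a) := by
    rw [π.commutes, IsScalarTower.algebraMap_apply A A' B']
  have ha' : algebraMap A A' a ∈ q.under A' := by
    simpa only [Ideal.mem_comap, hmap] using ha
  simpa only [Ideal.mem_comap, hmap] using hunder ha'

end Transfer

lemma coeff_mem_of_taylor_map_C_mem {A : Type*} [CommRing A] {𝔭 : Ideal A} {p r : A[X]}
    (h : taylor r (p.map C) ∈ (𝔭.map C).map (C : A[X] →+* A[X][X])) (i : ℕ) :
    p.coeff i ∈ 𝔭 := by
  have hstable : (𝔭.map C).map C ≤ ((𝔭.map C).map C).comap (taylorAlgHom (-r)) := by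
    rw [Ideal.map_le_iff_le_comap, Ideal.map_le_iff_le_comap]
    intro a ha
    simpa using Ideal.mem_map_of_mem _ (Ideal.mem_map_of_mem _ ha)
  have hp : p.map C ∈ (𝔭.map C).map (C : A[X] →+* A[X][X]) := by
    simpa [taylor_taylor] using hstable h
  have hCp : C (p.coeff i) ∈ 𝔭.map (C : A →+* A[X]) := by
    simpa only [coeff_map] using Ideal.mem_map_C_iff.mp hp i
  simpa only [coeff_C_zero] using Ideal.mem_map_C_iff.mp hCp 0

section Domain

variable {A D : Type*} [CommRing A] [CommRing D] [Algebra A D] {u g : D}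

lemma isAlgebraicModulo_of_pow_add {Φ : A[X][X]}
    (hroot : Φ.eval₂ (aeval u : A[X] →ₐ[A] D).toRingHom g = 0) {i j n : ℕ}
    (hn : ∀ i, (Φ.coeff i).natDegree < n) {q : Ideal D} (hq : q.IsPrime)
    (hij : algebraMap A D ((Φ.coeff i).coeff j) ∉ q) (hw : IsAlgebraicModulo A q (u ^ n + g)) :
    IsAlgebraicModulo A q u := by
  have : FaithfulSMul (A ⧸ q.under A) (D ⧸ q) :=
    (faithfulSMul_iff_algebraMap_injective _ _).mpr Ideal.algebraMap_quotient_injective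
  rw [isAlgebraicModulo_iff_isAlgebraic] at hw ⊢
  refine isAlgebraic_of_isAlgebraic_pow_add (g := Ideal.Quotient.mk q g) (n := n)
    (Φ := Φ.map (mapRingHom (Ideal.Quotient.mk (q.under A)))) ?_ ?_ ?_ (by simpa using hw)
  · intro h
    have hcoeff := congrArg (fun P => (P.coeff i).coeff j) h
    refine hij ?_
    simpa [Ideal.Quotient.eq_zero_iff_mem, Ideal.mem_comap] using hcoeff
  · have hmk := congrArg (Ideal.Quotient.mk q) hroot
    rw [hom_eval₂, map_zero] at hmk
    rw [eval₂_map, ← hmk]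
    congr 1
    ext a <;> simp
  · intro i
    rw [coeff_map, coe_mapRingHom]
    exact natDegree_map_le.trans_lt (hn i)

lemma under_eq_map_C_of_goesDownAway [Algebra A[X][X] D] [IsScalarTower A A[X][X] D] {φ : D}
    (hφ : GoesDownAway A[X][X] φ) {q : Ideal D} (hφq : φ ∉ q) (hmin : IsMinimalInFibre A q) :
    q.under A[X][X] = ((q.under A).map C).map C := by
  have hq : q.IsPrime := hmin.1.1
  have : ((q.under A).map (C : A →+* A[X])).IsPrime := Ideal.isPrime_map_C_of_isPrime
  have hCC (a : A) : algebraMap A[X][X] D (C (C a)) = algebraMap A D a :=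
    (IsScalarTower.algebraMap_apply A A[X][X] D a).symm
  have hle : ((q.under A).map C).map C ≤ q.under A[X][X] := by
    rw [Ideal.map_le_iff_le_comap, Ideal.map_le_iff_le_comap]
    intro a ha
    simpa only [Ideal.mem_comap, hCC] using ha
  obtain ⟨q₁, hq₁q, hq₁, hunder⟩ := hφ q hq hφq _ Ideal.isPrime_map_C_of_isPrime hle
  have hq₁_eq : q₁ = q := hmin.eq_of_le hq₁ hq₁q fun a ha => by
    have : C (C a) ∈ q₁.under A[X][X] :=
      hunder ▸ Ideal.mem_map_of_mem _ (Ideal.mem_map_of_mem _ ha)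
    simpa only [Ideal.mem_comap, hCC] using this
  exact hq₁_eq ▸ hunder

variable [IsDomain D] [IsNoetherianRing A] [Algebra.FiniteType A D]

lemma exists_forall_not_isAlgebraicModulo
    (hinj : Function.Injective (eval₂RingHom (aeval u : A[X] →ₐ[A] D).toRingHom g)) :
    ∃ φ : D, φ ≠ 0 ∧ ∀ (n : ℕ) (q : Ideal D), φ ∉ q → IsMinimalInFibre A q →
      ¬ IsAlgebraicModulo A q (u ^ n + g) := by
  let θ := eval₂RingHom (aeval u : A[X] →ₐ[A] D).toRingHom g
  let _ : Algebra A[X][X] D := θ.toAlgebra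
  have hθ : algebraMap A[X][X] D = θ := rfl
  have : IsScalarTower A A[X][X] D :=
    IsScalarTower.of_algebraMap_eq fun a => by simp [hθ, θ, Polynomial.algebraMap_apply]
  have : FaithfulSMul A[X][X] D := (faithfulSMul_iff_algebraMap_injective _ _).mpr hinj
  have : Algebra.FiniteType A[X][X] D := Algebra.FiniteType.of_restrictScalars_finiteType A _ _
  obtain ⟨φ, hφ0, hφ⟩ := exists_goesDownAway A[X][X] D
  refine ⟨φ, hφ0, ?_⟩
  rintro n q hφq hmin ⟨p, ⟨i, hi⟩, hp⟩
  refine hi (coeff_mem_of_taylor_map_C_mem (r := X ^ n) (p := p) (𝔭 := q.under A) ?_ i)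
  have haeval : algebraMap A[X][X] D (taylor (X ^ n) (p.map C)) = aeval (u ^ n + g) p := by
    simp only [hθ, θ, taylor_apply, coe_eval₂RingHom, eval₂_comp, eval₂_map, aeval_def]
    congr 1
    · ext a; simp
    · rw [eval₂_add, eval₂_X, eval₂_C]; simp [add_comm]
  rwa [← under_eq_map_C_of_goesDownAway hφ hφq hmin, Ideal.mem_comap, haeval]

variable (A u g) in
lemma exists_eventually_isAlgebraicModulo_of_pow_add [FaithfulSMul A D] :
    ∃ φ : D, φ ≠ 0 ∧ ∀ᶠ n : ℕ in Filter.atTop, ∀ q : Ideal D, φ ∉ q → IsMinimalInFibre A q →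
      IsAlgebraicModulo A q (u ^ n + g) → IsAlgebraicModulo A q u := by
  by_cases hinj : Function.Injective (eval₂RingHom (aeval u : A[X] →ₐ[A] D).toRingHom g)
  · obtain ⟨φ, hφ0, hφ⟩ := exists_forall_not_isAlgebraicModulo hinj
    exact ⟨φ, hφ0, .of_forall fun n q hφq hmin hw => (hφ n q hφq hmin hw).elim⟩
  simp only [injective_iff_map_eq_zero, not_forall] at hinj
  obtain ⟨Φ, hroot, hΦ⟩ := hinj
  obtain ⟨i, hi⟩ : ∃ i, Φ.coeff i ≠ 0 := by simpa [Polynomial.ext_iff (p := Φ)] using hΦ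
  obtain ⟨j, hij⟩ : ∃ j, (Φ.coeff i).coeff j ≠ 0 := by
    simpa [Polynomial.ext_iff (p := Φ.coeff i)] using hi
  have hdeg : ∀ᶠ n : ℕ in Filter.atTop, ∀ m ∈ Φ.support, (Φ.coeff m).natDegree < n :=
    (Φ.support.eventually_all).mpr fun m _ => Filter.eventually_gt_atTop _
  refine ⟨algebraMap A D ((Φ.coeff i).coeff j), by simpa using hij, ?_⟩
  filter_upwards [hdeg, Filter.eventually_gt_atTop 0] with n hn hn0 q hc hmin
  refine isAlgebraicModulo_of_pow_add hroot (fun m => ?_) hmin.1.1 hc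
  by_cases hm : m ∈ Φ.support
  · exact hn m hm
  · simpa [notMem_support_iff.mp hm] using hn0

end Domain

lemma eventually_forall_isPrime_of_forall_exists {B ι : Type*} [CommRing B] [IsNoetherianRing B]
    {l : Filter ι} {P : ι → Ideal B → Prop}
    (h : ∀ p : Ideal B, p.IsPrime →
      ∃ φ ∉ p, ∀ᶠ n in l, ∀ q : Ideal B, q.IsPrime → p ≤ q → φ ∉ q → P n q) :
    ∀ᶠ n in l, ∀ q : Ideal B, q.IsPrime → P n q := by
  suffices hJ : ∀ J : Ideal B, ∀ᶠ n in l, ∀ q : Ideal B, q.IsPrime → J ≤ q → P n q by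
    filter_upwards [hJ ⊥] with n hn q hq using hn q hq bot_le
  intro J
  induction J using IsNoetherian.induction with
  | hgt J ih =>
  change Ideal B at J
  have hcomponent : ∀ p ∈ J.minimalPrimes,
      ∀ᶠ n in l, ∀ q : Ideal B, q.IsPrime → p ≤ q → P n q := by
    intro p hp
    obtain ⟨φ, hφ, hgeneric⟩ := h p hp.1.1
    have hlt : J < p ⊔ Ideal.span {φ} :=
      hp.1.2.trans_lt (left_lt_sup.mpr fun hle => hφ (hle (Ideal.mem_span_singleton_self φ)))
    filter_upwards [hgeneric, ih _ hlt] with n hn hspecial q hq hpq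
    by_cases hφq : φ ∈ q
    · exact hspecial q hq (sup_le hpq ((Ideal.span_singleton_le_iff_mem _).mpr hφq))
    · exact hn q hq hpq hφq
  filter_upwards [(J.finite_minimalPrimes_of_isNoetherianRing B).eventually_all.mpr hcomponent]
    with n hn q hq hJq
  obtain ⟨p, hp, hpq⟩ := Ideal.exists_minimalPrimes_le hJq
  exact hn p hp q hq hpq

theorem eventually_isAlgebraicModulo_of_pow_add {A B : Type*} [CommRing A] [IsNoetherianRing A]
    [CommRing B] [Algebra A B] [Algebra.FiniteType A B] (u g : B) :
    ∀ᶠ n : ℕ in Filter.atTop, ∀ q : Ideal B, IsMinimalInFibre A q →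
      IsAlgebraicModulo A q (u ^ n + g) → IsAlgebraicModulo A q u := by
  have : IsNoetherianRing B := Algebra.FiniteType.isNoetherianRing A B
  suffices h : ∀ᶠ n : ℕ in Filter.atTop, ∀ q : Ideal B, q.IsPrime → IsMinimalInFibre A q →
      IsAlgebraicModulo A q (u ^ n + g) → IsAlgebraicModulo A q u by
    filter_upwards [h] with n hn q hq using hn q hq.1.1 hq
  refine eventually_forall_isPrime_of_forall_exists fun p hp => ?_
  let A' := A ⧸ p.under A
  have : FaithfulSMul A' (B ⧸ p) :=
    (faithfulSMul_iff_algebraMap_injective _ _).mpr Ideal.algebraMap_quotient_injective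
  have : Algebra.FiniteType A' (B ⧸ p) := Algebra.FiniteType.of_restrictScalars_finiteType A _ _
  obtain ⟨φ', hφ', hgeneric⟩ := exists_eventually_isAlgebraicModulo_of_pow_add A'
    (Ideal.Quotient.mk p u) (Ideal.Quotient.mk p g)
  obtain ⟨φ, rfl⟩ := Ideal.Quotient.mk_surjective φ'
  refine ⟨φ, by simpa [Ideal.Quotient.eq_zero_iff_mem] using hφ', ?_⟩
  filter_upwards [hgeneric] with n hn q hq hpq hφq hmin hw
  let π := Ideal.Quotient.mkₐ A p
  have hπ : Function.Surjective π := Ideal.Quotient.mkₐ_surjective A p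
  have hker : RingHom.ker π ≤ q := (Ideal.Quotient.mkₐ_ker A p).trans_le hpq
  obtain ⟨q', hq', rfl⟩ : ∃ q' : Ideal (B ⧸ p), q'.IsPrime ∧ q'.comap π = q :=
    ⟨q.map π, Ideal.map_isPrime_of_surjective hπ hker,
      Ideal.comap_map_of_surjective' π hπ q |>.trans (sup_eq_left.mpr hker)⟩
  have hA : Function.Surjective (algebraMap A A') := Ideal.Quotient.mk_surjective
  rw [isAlgebraicModulo_comap_iff hA] at hw ⊢
  exact hn q' hφq (hmin.of_comap hπ hq') (by rwa [map_add, map_pow] at hw)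

end AlgebraicModulo

/-! ### Homogeneous avoidance -/

section Avoidance

lemma pow_add_pow_mul_div_pow {K : Type*} [Field K] {f : K} (hf : f ≠ 0) (p g : K) {b n : ℕ}
    (hbn : b ≤ n) : (p ^ n + f ^ (n - b) * g) / f ^ n = (p / f) ^ n + g / f ^ b := by
  obtain ⟨c, rfl⟩ := Nat.exists_eq_add_of_le' hbn
  rw [Nat.add_sub_cancel, add_div, div_pow, pow_add f,
    mul_div_mul_left _ _ (pow_ne_zero _ hf)]

lemma eventually_iterate_sq_sub_add_one_ne_zero {K : Type*} [Field K] (y : K) :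
    ∀ᶠ j in Filter.atTop, (fun z : K => z ^ 2 - z + 1)^[j] y ≠ 0 := by
  by_cases hy : ∃ i, (fun z : K => z ^ 2 - z + 1)^[i] y = 0
  · obtain ⟨i, hi⟩ := hy
    have hone : ∀ j ≥ i + 1, (fun z : K => z ^ 2 - z + 1)^[j] y = 1 := by
      intro j hj
      induction j, hj using Nat.le_induction with
      | base => simp [Function.iterate_succ_apply', hi]
      | succ j _ ih => simp [Function.iterate_succ_apply', ih]
    filter_upwards [Filter.eventually_ge_atTop (i + 1)] with j hj
    simp [hone j hj]
  · push Not at hy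
    exact .of_forall hy

lemma mem_of_iterate_sq_sub_add_one_mem {K : Type*} [Field K] {k : Subfield K}
    (hk : ∀ z : K, IsAlgebraic k z → z ∈ k) {y : K} {j : ℕ}
    (hy : (fun z : K => z ^ 2 - z + 1)^[j] y ∈ k) : y ∈ k := by
  open Polynomial in
  induction j generalizing y with
  | zero => exact hy
  | succ j ih =>
    rw [Function.iterate_succ_apply] at hy
    have hmonic : (X ^ 2 - X + 1 - C ⟨_, ih hy⟩ : k[X]).Monic := by monicity!
    exact hk y ⟨_, hmonic.ne_zero, by simp [Algebra.algebraMap_eq_smul_one, Subfield.smul_def]⟩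

lemma pow_add_pow_mul_mem {R : Type*} [CommRing R] {𝒜 : ℕ → AddSubgroup R}
    [SetLike.GradedMonoid 𝒜] {m b n : ℕ} {P F G : R} (hP : P ∈ 𝒜 m) (hF : F ∈ 𝒜 m)
    (hG : G ∈ 𝒜 (b * m)) (hbn : b ≤ n) : P ^ n + F ^ (n - b) * G ∈ 𝒜 (n * m) := by
  refine add_mem (SetLike.pow_mem_graded n hP) ?_
  have hmul := SetLike.mul_mem_graded (SetLike.pow_mem_graded (n - b) hF) hG
  rwa [smul_eq_mul, ← add_mul, Nat.sub_add_cancel hbn] at hmul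

/-- The setting of the avoidance argument: homogeneous elements of a graded family `𝒜` are
evaluated at the points `x : X` in fields `K x`, and only ratios of elements of equal degree
matter. -/
structure AvoidanceData {R : Type*} [CommRing R] (𝒜 : ℕ → AddSubgroup R) {X : Type*}
    (K : X → Type*) [∀ x, Field (K x)] where
  /-- evaluation at a point -/
  eval : ∀ x, R →+* K x
  /-- the points at which the sections to be constructed must not vanish -/
  generic : Set X
  /-- the field of constants at a point -/
  const : ∀ x, Subfield (K x)
  mem_const_of_isAlgebraic : ∀ x y, IsAlgebraic (const x) y → y ∈ const x
  eventually_div_mem_const : ∀ {m b : ℕ} {P F G : R}, P ∈ 𝒜 m → F ∈ 𝒜 m → G ∈ 𝒜 (b * m) →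
    ∀ᶠ n : ℕ in Filter.atTop, ∀ x ∈ generic, eval x F ≠ 0 →
      (eval x P / eval x F) ^ n + eval x G / eval x F ^ b ∈ const x →
        eval x P / eval x F ∈ const x
  /-- a finite family of elements of degree one without common zero -/
  gens : Finset R
  mem_of_mem_gens : ∀ T ∈ gens, T ∈ 𝒜 1
  exists_eval_ne_zero : ∀ x, ∃ T ∈ gens, eval x T ≠ 0
  exists_div_notMem_const : ∀ x ∈ generic,
    ∃ T ∈ gens, ∃ T' ∈ gens, eval x T' ≠ 0 ∧ eval x T / eval x T' ∉ const x

namespace AvoidanceData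

variable {R : Type*} [CommRing R] {𝒜 : ℕ → AddSubgroup R} [SetLike.GradedMonoid 𝒜] {X : Type*}
  {K : X → Type*} [∀ x, Field (K x)] (V : AvoidanceData 𝒜 K) {m : ℕ} {F : R}

lemma exists_forall_div_mem_const (hF : F ∈ 𝒜 m) (s : Finset R) (hs : ∀ t ∈ s, t ∈ 𝒜 m) :
    ∃ b, ∃ G ∈ 𝒜 (b * m), ∀ x ∈ V.generic, V.eval x F ≠ 0 →
      V.eval x G / V.eval x F ^ b ∈ V.const x → ∀ t ∈ s, V.eval x t / V.eval x F ∈ V.const x := by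
  classical
  induction s using Finset.induction_on with
  | empty => exact ⟨0, 0, zero_mem _, by simp⟩
  | insert t s _ ih =>
    obtain ⟨b, G, hG, hmem⟩ := ih fun t' ht' => hs t' (Finset.mem_insert_of_mem ht')
    have ht := hs t (Finset.mem_insert_self t s)
    obtain ⟨n, hn, hbn⟩ :=
      ((V.eventually_div_mem_const ht hF hG).and (Filter.eventually_ge_atTop b)).exists
    refine ⟨n, t ^ n + F ^ (n - b) * G, pow_add_pow_mul_mem ht hF hG hbn, fun x hx hFx hconst => ?_⟩
    simp only [map_add, map_mul, map_pow, pow_add_pow_mul_div_pow hFx _ _ hbn] at hconst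
    have htF := hn x hx hFx hconst
    have hGF : V.eval x G / V.eval x F ^ b ∈ V.const x := by
      simpa using sub_mem hconst (pow_mem htF n)
    exact Finset.forall_mem_insert _ _ _ |>.mpr ⟨htF, hmem x hx hFx hGF⟩

lemma exists_div_pow_notMem_const (hm : 0 < m) (hF : F ∈ 𝒜 m) :
    ∃ b, ∃ G ∈ 𝒜 (b * m), ∀ x ∈ V.generic, V.eval x F ≠ 0 →
      V.eval x G / V.eval x F ^ b ∉ V.const x := by
  classical
  obtain ⟨b, G, hG, hmem⟩ := V.exists_forall_div_mem_const hF (V.gens.image (· ^ m)) (by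
    simp only [Finset.forall_mem_image]
    exact fun T hT => by simpa using SetLike.pow_mem_graded m (V.mem_of_mem_gens T hT))
  refine ⟨b, G, hG, fun x hx hFx hconst => ?_⟩
  obtain ⟨T, hT, T', hT', -, hnot⟩ := V.exists_div_notMem_const x hx
  have hpow : (V.eval x T / V.eval x T') ^ m ∈ V.const x := by
    simpa [div_div_div_cancel_right₀ hFx, div_pow] using
      div_mem (hmem x hx hFx hconst _ (Finset.mem_image_of_mem _ hT))
        (hmem x hx hFx hconst _ (Finset.mem_image_of_mem _ hT'))
  refine hnot (V.mem_const_of_isAlgebraic x _ (.of_pow hm ?_))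
  exact isAlgebraic_algebraMap (⟨_, hpow⟩ : V.const x)

/-- The recursion `G ↦ G² - G Fᵇ + F²ᵇ` homogenizes `z ↦ z² - z + 1`. -/
lemma exists_div_pow_eq_iterate (hF : F ∈ 𝒜 m) {b : ℕ} {G : R} (hG : G ∈ 𝒜 (b * m)) (j : ℕ) :
    ∃ b', ∃ G' ∈ 𝒜 (b' * m), ∀ x, V.eval x F ≠ 0 → V.eval x G' / V.eval x F ^ b' =
      (fun z => z ^ 2 - z + 1)^[j] (V.eval x G / V.eval x F ^ b) := by
  induction j with
  | zero => exact ⟨b, G, hG, fun _ _ => rfl⟩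
  | succ j ih =>
    obtain ⟨c, H, hH, hiter⟩ := ih
    have hFc : F ^ c ∈ 𝒜 (c * m) := SetLike.pow_mem_graded c hF
    refine ⟨c + c, H * H - H * F ^ c + F ^ c * F ^ c, ?_, fun x hFx => ?_⟩
    · rw [add_mul]
      exact add_mem (sub_mem (SetLike.mul_mem_graded hH hH) (SetLike.mul_mem_graded hH hFc))
        (SetLike.mul_mem_graded hFc hFc)
    · rw [Function.iterate_succ_apply', ← hiter x hFx]
      simp only [map_add, map_sub, map_mul, map_pow]
      field

lemma exists_div_pow_notMem_const_and_eval_ne_zero (hm : 0 < m) (hF : F ∈ 𝒜 m) (A : Finset X)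
    (hA : ∀ x ∈ A, V.eval x F ≠ 0) :
    ∃ b, ∃ G ∈ 𝒜 (b * m), (∀ x ∈ V.generic, V.eval x F ≠ 0 →
      V.eval x G / V.eval x F ^ b ∉ V.const x) ∧ ∀ x ∈ A, V.eval x G ≠ 0 := by
  obtain ⟨b, G, hG, hnot⟩ := V.exists_div_pow_notMem_const hm hF
  obtain ⟨j, hj⟩ := ((Finset.eventually_all A).mpr fun x _ =>
    eventually_iterate_sq_sub_add_one_ne_zero (V.eval x G / V.eval x F ^ b)).exists
  obtain ⟨b', G', hG', hiter⟩ := V.exists_div_pow_eq_iterate hF hG j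
  refine ⟨b', G', hG', fun x hx hFx hconst => hnot x hx hFx ?_, fun x hx hzero => hj x hx ?_⟩
  · rw [hiter x hFx] at hconst
    exact mem_of_iterate_sq_sub_add_one_mem (V.mem_const_of_isAlgebraic x) hconst
  · rw [← hiter x (hA x hx), hzero, zero_div]

lemma eventually_exists_eval_ne_zero (hm : 0 < m) {P : R} (hF : F ∈ 𝒜 m) (hP : P ∈ 𝒜 m)
    (A : Finset X) (hAF : ∀ x ∈ A, V.eval x F ≠ 0) (hAP : ∀ x ∈ A, V.eval x P = 0) :
    ∀ᶠ n in Filter.atTop, ∃ H ∈ 𝒜 (n * m),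
      (∀ x ∈ V.generic, V.eval x F ≠ 0 → V.eval x H ≠ 0) ∧
      (∀ x, V.eval x F = 0 → V.eval x P ≠ 0 → V.eval x H ≠ 0) ∧ ∀ x ∈ A, V.eval x H ≠ 0 := by
  obtain ⟨b, G, hG, hnot, hAG⟩ := V.exists_div_pow_notMem_const_and_eval_ne_zero hm hF A hAF
  filter_upwards [V.eventually_div_mem_const hP hF hG, Filter.eventually_gt_atTop b] with n hn hbn
  have heval (x : X) : V.eval x (P ^ n + F ^ (n - b) * G) =
      V.eval x P ^ n + V.eval x F ^ (n - b) * V.eval x G := by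
    simp only [map_add, map_mul, map_pow]
  refine ⟨P ^ n + F ^ (n - b) * G, pow_add_pow_mul_mem hP hF hG hbn.le,
    fun x hx hFx hzero => hnot x hx hFx ?_, fun x hFx hPx => ?_, fun x hx => ?_⟩
  · have hsum : (V.eval x P / V.eval x F) ^ n + V.eval x G / V.eval x F ^ b = 0 := by
      rw [← pow_add_pow_mul_div_pow hFx _ _ hbn.le, ← heval, hzero, zero_div]
    have hPF := hn x hx hFx (hsum ▸ zero_mem _)
    exact eq_neg_of_add_eq_zero_right hsum ▸ neg_mem (pow_mem hPF n)
  · rw [heval, hFx, zero_pow (Nat.sub_ne_zero_of_lt hbn), zero_mul, add_zero]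
    exact pow_ne_zero _ hPx
  · rw [heval, hAP x hx, zero_pow (Nat.ne_zero_of_lt hbn), zero_add]
    exact mul_ne_zero (pow_ne_zero _ (hAF x hx)) (hAG x hx)

section PowersOfFixedBase

variable {e : ℕ} (he : 1 < e)

include he

lemma exists_eval_ne_zero_of_subset_gens (s : Finset R) (hs : s ⊆ V.gens) :
    ∃ k, ∃ F ∈ 𝒜 (e ^ k), ∀ x ∈ V.generic, (∃ T ∈ s, V.eval x T ≠ 0) → V.eval x F ≠ 0 := by
  classical
  induction s using Finset.induction_on with
  | empty => exact ⟨0, 0, zero_mem _, by simp⟩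
  | insert T s _ ih =>
    obtain ⟨hT, hs⟩ := Finset.insert_subset_iff.mp hs
    obtain ⟨k, F, hF, hne⟩ := ih hs
    have hTpow : T ^ e ^ k ∈ 𝒜 (e ^ k) := by
      simpa using SetLike.pow_mem_graded (e ^ k) (V.mem_of_mem_gens T hT)
    obtain ⟨l, H, hH, hFH, hTH, -⟩ := ((tendsto_pow_atTop_atTop_of_one_lt he).eventually
      (V.eventually_exists_eval_ne_zero (by positivity) hF hTpow ∅ (by simp) (by simp))).exists
    refine ⟨l + k, H, by rwa [pow_add], fun x hx hex => ?_⟩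
    by_cases hFx : V.eval x F = 0
    · refine hTH x hFx ?_
      rw [Finset.exists_mem_insert] at hex
      simpa [Nat.ne_zero_of_lt he] using hex.resolve_right fun hex => hne x hx hex hFx
    · exact hFH x hx hFx

lemma exists_eval_ne_zero_insert [DecidableEq X] {A : Finset X} {p : X} {k n : ℕ} {H : R}
    (hF : F ∈ 𝒜 (e ^ k)) (hgen : ∀ x ∈ V.generic, V.eval x F ≠ 0)
    (hAF : ∀ x ∈ A, V.eval x F ≠ 0) (hH : H ∈ 𝒜 n) (hpH : V.eval p H ≠ 0)
    (hAH : ∀ x ∈ A, V.eval x H = 0) :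
    ∃ k, ∃ F ∈ 𝒜 (e ^ k), (∀ x ∈ V.generic, V.eval x F ≠ 0) ∧
      ∀ x ∈ insert p A, V.eval x F ≠ 0 := by
  by_cases hpF : V.eval p F = 0
  swap
  · exact ⟨k, F, hF, hgen, Finset.forall_mem_insert _ _ _ |>.mpr ⟨hpF, hAF⟩⟩
  obtain ⟨l, hl⟩ := ((tendsto_pow_atTop_atTop_of_one_lt he).eventually
    (Filter.eventually_ge_atTop n)).exists
  obtain ⟨T, hT, hpT⟩ := V.exists_eval_ne_zero p
  have he₀ : e ≠ 0 := by positivity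
  have hTH : T ^ (e ^ l - n) * H ∈ 𝒜 (e ^ l) := by
    simpa [Nat.sub_add_cancel hl] using
      SetLike.mul_mem_graded (SetLike.pow_mem_graded (e ^ l - n) (V.mem_of_mem_gens T hT)) hH
  have hFpow : F ^ e ^ l ∈ 𝒜 (e ^ (k + l)) := by
    simpa [pow_add, mul_comm] using SetLike.pow_mem_graded (e ^ l) hF
  have hTHpow : (T ^ (e ^ l - n) * H) ^ e ^ k ∈ 𝒜 (e ^ (k + l)) := by
    simpa only [pow_add, smul_eq_mul] using SetLike.pow_mem_graded (e ^ k) hTH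
  obtain ⟨i, Q, hQ, hFQ, hTHQ, hAQ⟩ := ((tendsto_pow_atTop_atTop_of_one_lt he).eventually
    (V.eventually_exists_eval_ne_zero (by positivity) hFpow hTHpow A
      (fun x hx => by simpa using fun h => (hAF x hx h).elim)
      (fun x hx => by simp [hAH x hx, he₀]))).exists
  refine ⟨i + (k + l), Q, by rwa [pow_add], fun x hx => hFQ x hx ?_,
    Finset.forall_mem_insert _ _ _ |>.mpr ⟨hTHQ p ?_ ?_, hAQ⟩⟩
  · simpa using fun h => (hgen x hx h).elim
  · simp [hpF, he₀]
  · simp [hpT, hpH]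

end PowersOfFixedBase

lemma exists_homogeneous_eval_ne_zero {p : X} (s : Finset X)
    (hs : ∀ y ∈ s, ∃ n, ∃ E ∈ 𝒜 n, V.eval y E = 0 ∧ V.eval p E ≠ 0) :
    ∃ n, ∃ H ∈ 𝒜 n, V.eval p H ≠ 0 ∧ ∀ y ∈ s, V.eval y H = 0 := by
  classical
  induction s using Finset.induction_on with
  | empty => exact ⟨0, 1, SetLike.one_mem_graded 𝒜, by simp, by simp⟩
  | insert y s _ ih =>
    obtain ⟨⟨n, E, hE, hyE, hpE⟩, hs⟩ := Finset.forall_mem_insert _ _ _ |>.mp hs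
    obtain ⟨n', H, hH, hpH, hsH⟩ := ih hs
    refine ⟨_, _, SetLike.mul_mem_graded hE hH, by simp [hpE, hpH],
      Finset.forall_mem_insert _ _ _ |>.mpr ⟨by simp [hyE], fun x hx => by simp [hsH x hx]⟩⟩

lemma exists_eval_ne_zero_pow {e : ℕ} (he : 1 < e) (A : Finset X) :
    ∃ k, ∃ F ∈ 𝒜 (e ^ k), (∀ x ∈ V.generic, V.eval x F ≠ 0) ∧ ∀ x ∈ A, V.eval x F ≠ 0 := by
  classical
  induction A using Finset.strongInduction with
  | H A ih =>
  obtain rfl | ⟨p, hp⟩ := A.eq_empty_or_nonempty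
  · obtain ⟨k, F, hF, hne⟩ := V.exists_eval_ne_zero_of_subset_gens he V.gens subset_rfl
    exact ⟨k, F, hF, fun x hx => hne x hx (V.exists_eval_ne_zero x), by simp⟩
  by_cases hdom : ∃ y ∈ A.erase p, ∀ n, ∀ E ∈ 𝒜 n, V.eval y E = 0 → V.eval p E = 0
  · obtain ⟨y, hy, hyp⟩ := hdom
    obtain ⟨hne, hyA⟩ := Finset.mem_erase.mp hy
    obtain ⟨k, F, hF, hgen, hAF⟩ := ih _ (Finset.erase_ssubset hyA)
    rw [← Finset.insert_erase hyA]
    have hpF := hAF p (Finset.mem_erase.mpr ⟨hne.symm, hp⟩)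
    exact ⟨k, F, hF, hgen,
      Finset.forall_mem_insert _ _ _ |>.mpr ⟨fun h => hpF (hyp _ F hF h), hAF⟩⟩
  · push Not at hdom
    obtain ⟨k, F, hF, hgen, hAF⟩ := ih _ (Finset.erase_ssubset hp)
    obtain ⟨n, H, hH, hpH, hAH⟩ := V.exists_homogeneous_eval_ne_zero _ hdom
    rw [← Finset.insert_erase hp]
    exact V.exists_eval_ne_zero_insert he hF hgen hAF hH hpH hAH

/-- Every large `n` is a sum of multiples of a power of `2` and a power of `3`. -/
theorem eventually_exists_forall_eval_ne_zero (A : Finset X) :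
    ∀ᶠ n in Filter.atTop, ∃ F ∈ 𝒜 n,
      (∀ x ∈ V.generic, V.eval x F ≠ 0) ∧ ∀ x ∈ A, V.eval x F ≠ 0 := by
  obtain ⟨a, F, hF, hgenF, hAF⟩ := V.exists_eval_ne_zero_pow one_lt_two A
  obtain ⟨b, H, hH, hgenH, hAH⟩ := V.exists_eval_ne_zero_pow (e := 3) (by norm_num) A
  have hcoprime : Nat.gcd (2 ^ a) (3 ^ b) = 1 := Nat.Coprime.pow _ _ (by norm_num)
  filter_upwards [Filter.eventually_ge_atTop (2 ^ a * 3 ^ b)] with n hn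
  obtain ⟨i, j, hij⟩ := Nat.exists_add_mul_eq_of_gcd_dvd_of_mul_pred_le (2 ^ a) (3 ^ b) n
    (hcoprime ▸ one_dvd _) ((Nat.mul_le_mul (Nat.pred_le _) (Nat.pred_le _)).trans hn)
  have hne (x : X) (hFx : V.eval x F ≠ 0) (hHx : V.eval x H ≠ 0) :
      V.eval x (F ^ i * H ^ j) ≠ 0 := by
    rw [map_mul, map_pow, map_pow]
    exact mul_ne_zero (pow_ne_zero _ hFx) (pow_ne_zero _ hHx)
  refine ⟨F ^ i * H ^ j, hij ▸ ?_, fun x hx => hne x (hgenF x hx) (hgenH x hx),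
    fun x hx => hne x (hAF x hx) (hAH x hx)⟩
  exact SetLike.mul_mem_graded (SetLike.pow_mem_graded i hF) (SetLike.pow_mem_graded j hH)

end AvoidanceData

end Avoidance

/-! ### Dimension of algebras of finite type over a field -/

section KrullDimension

lemma height_mvPolynomial_fin (k : Type*) [Field k] (n : ℕ) (m : Ideal (MvPolynomial (Fin n) k))
    [m.IsMaximal] : m.height = n := by
  open Polynomial in
  induction n with
  | zero =>
    have hfield : IsField (MvPolynomial (Fin 0) k) :=
      (MvPolynomial.isEmptyRingEquiv k (Fin 0)).toMulEquiv.isField (Field.toIsField k)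
    let _ := hfield.toField
    simp [Ideal.eq_bot_of_prime m]
  | succ n ih =>
    let e := (MvPolynomial.finSuccEquiv k n).toRingEquiv
    let m' : Ideal (MvPolynomial (Fin n) k)[X] := m.comap e.symm
    have : m'.IsMaximal := Ideal.comap_isMaximal_of_equiv e.symm
    have : (m'.under (MvPolynomial (Fin n) k)).IsMaximal :=
      Polynomial.isMaximal_comap_C_of_isJacobsonRing m'
    have : m'.LiesOver (m'.under (MvPolynomial (Fin n) k)) := ⟨rfl⟩
    rw [← RingEquiv.height_comap e.symm m,
      Polynomial.height_eq_height_add_one (m'.under (MvPolynomial (Fin n) k)) m', ih]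
    simp

lemma ringKrullDim_le_of_isIntegral (R S : Type*) [CommRing R] [CommRing S] [Algebra R S]
    [Algebra.IsIntegral R S] : ringKrullDim S ≤ ringKrullDim R :=
  Order.krullDim_le_of_strictMono (PrimeSpectrum.comap (algebraMap R S))
    fun _ _ hlt => Ideal.IsIntegral.comap_lt_comap hlt

variable {R : Type*} [CommRing R]

lemma ringKrullDim_quotient_le_of_isLocalization (M : Submonoid R) {S : Type*} [CommRing S]
    [Algebra R S] [IsLocalization M S] {I : Ideal S} {J : Ideal R}
    (hJ : ∀ P : Ideal S, P.IsPrime → I ≤ P → J ≤ P.under R) :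
    ringKrullDim (S ⧸ I) ≤ ringKrullDim (R ⧸ J) := by
  rw [ringKrullDim_quotient, ringKrullDim_quotient]
  have hmono : StrictMono (PrimeSpectrum.comap (algebraMap R S)) :=
    Monotone.strictMono_of_injective (fun _ _ hle => Ideal.comap_mono hle)
      (PrimeSpectrum.localization_comap_injective S M)
  exact Order.krullDim_le_of_strictMono
    (fun P : PrimeSpectrum.zeroLocus (I : Set S) =>
      (⟨_, hJ P.1.asIdeal P.1.isPrime P.2⟩ : PrimeSpectrum.zeroLocus (J : Set R)))
    fun P Q hlt => hmono hlt

lemma exists_notMem_forall_le_of_mem_minimalPrimes [IsNoetherianRing R] {I p : Ideal R}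
    (hp : p ∈ I.minimalPrimes) :
    ∃ g ∉ p, ∀ P : Ideal R, P.IsPrime → I ≤ P → g ∉ P → p ≤ P := by
  classical
  have hfin := Ideal.finite_minimalPrimes_of_isNoetherianRing R I
  have hnle : ¬ (hfin.toFinset.erase p).inf id ≤ p := by
    rw [Ideal.IsPrime.inf_le' hp.1.1]
    rintro ⟨p', hp', hle⟩
    rw [Finset.mem_erase, Set.Finite.mem_toFinset] at hp'
    exact hp'.1 (le_antisymm hle (hp.2 hp'.2.1 hle))
  obtain ⟨g, hg, hgp⟩ := SetLike.not_le_iff_exists.mp hnle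
  refine ⟨g, hgp, fun P hP hIP hgP => ?_⟩
  obtain ⟨p', hp', hle⟩ := Ideal.exists_minimalPrimes_le hIP
  obtain rfl | hne := eq_or_ne p' p
  · exact hle
  · have hgp' : g ∈ p' :=
      Finset.inf_le (f := id) (Finset.mem_erase.mpr ⟨hne, hfin.mem_toFinset.mpr hp'⟩) hg
    exact absurd (hle hgp') hgP

lemma exists_isMaximal_le_notMem [IsJacobsonRing R] {p : Ideal R} [p.IsPrime] {g : R}
    (hg : g ∉ p) : ∃ m : Ideal R, m.IsMaximal ∧ p ≤ m ∧ g ∉ m := by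
  have hjac : p.jacobson = p := isJacobsonRing_iff.mp inferInstance p (Ideal.IsPrime.isRadical ‹_›)
  rw [← hjac, Ideal.jacobson, Submodule.mem_sInf] at hg
  push Not at hg
  obtain ⟨m, ⟨hpm, hm⟩, hgm⟩ := hg
  exact ⟨m, hm, hpm, hgm⟩

lemma map_mk_mem_minimalPrimes {I q p : Ideal R} (hqp : q ≤ p) (hp : p ∈ I.minimalPrimes) :
    p.map (Ideal.Quotient.mk q) ∈ (I.map (Ideal.Quotient.mk q)).minimalPrimes := by
  have hcomap : (p.map (Ideal.Quotient.mk q)).comap (Ideal.Quotient.mk q) = p := by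
    rw [Ideal.comap_map_of_surjective' _ Ideal.Quotient.mk_surjective, Ideal.mk_ker,
      sup_eq_left.mpr hqp]
  have := hp.1.1
  refine ⟨⟨Ideal.map_isPrime_of_surjective Ideal.Quotient.mk_surjective (by rwa [Ideal.mk_ker]),
    Ideal.map_mono hp.1.2⟩, fun P ⟨hP, hIP⟩ hPp => ?_⟩
  rw [Ideal.map_le_iff_le_comap] at hIP ⊢
  exact hp.2 ⟨inferInstance, hIP⟩ ((Ideal.comap_mono hPp).trans_eq hcomap)

variable (k : Type*) [Field k] [Algebra k R] [Algebra.FiniteType k R]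

include k

lemma ringKrullDim_le_height_of_isMaximal [IsDomain R] (m : Ideal R) [m.IsMaximal] :
    ringKrullDim R ≤ m.height := by
  obtain ⟨s, φ, hinj, hintegral⟩ := exists_integral_inj_algHom_of_fg k R
  have : IsNoetherianRing R := Algebra.FiniteType.isNoetherianRing k R
  let _ : Algebra (MvPolynomial (Fin s) k) R := φ.toRingHom.toAlgebra
  have : Algebra.IsIntegral (MvPolynomial (Fin s) k) R := ⟨hintegral⟩
  have : FaithfulSMul (MvPolynomial (Fin s) k) R :=
    (faithfulSMul_iff_algebraMap_injective _ _).mpr hinj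
  have : (m.under (MvPolynomial (Fin s) k)).IsMaximal :=
    Ideal.isMaximal_comap_of_isIntegral_of_isMaximal m
  have hheight : (s : ℕ∞) ≤ m.height := by
    rw [Ideal.height_eq_height_add_of_liesOver_of_hasGoingDown
      (m.under (MvPolynomial (Fin s) k)) m, height_mvPolynomial_fin]
    exact le_self_add
  calc ringKrullDim R ≤ ringKrullDim (MvPolynomial (Fin s) k) := ringKrullDim_le_of_isIntegral _ R
    _ = s := by simp [MvPolynomial.ringKrullDim_of_isNoetherianRing]
    _ ≤ m.height := WithBot.coe_le_coe.mpr hheight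

lemma ringKrullDim_le_ringKrullDim_localizationAway [IsDomain R] {a : R} (ha : a ≠ 0)
    (S : Type*) [CommRing S] [Algebra R S] [IsLocalization.Away a S] :
    ringKrullDim R ≤ ringKrullDim S := by
  have : IsJacobsonRing R := isJacobsonRing_of_finiteType (A := k)
  have hinj := IsLocalization.injective S (powers_le_nonZeroDivisors_of_noZeroDivisors ha)
  have : Nontrivial S := hinj.nontrivial
  obtain ⟨M, hM⟩ := Ideal.exists_maximal S
  have : (M.under R).IsMaximal := ((IsLocalization.isMaximal_iff_isMaximal_disjoint S a M).mp hM).1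
  calc ringKrullDim R ≤ (M.under R).height := ringKrullDim_le_height_of_isMaximal k _
    _ = M.height := by rw [IsLocalization.height_under (Submonoid.powers a) M]
    _ ≤ ringKrullDim S := Ideal.height_le_ringKrullDim_of_ne_top hM.ne_top

lemma ringKrullDim_le_ringKrullDim_quotient_add_one [IsDomain R] {h : R} {p : Ideal R}
    (hp : p ∈ (Ideal.span {h}).minimalPrimes) :
    ringKrullDim R ≤ ringKrullDim (R ⧸ p) + 1 := by
  have : IsJacobsonRing R := isJacobsonRing_of_finiteType (A := k)
  have : IsNoetherianRing R := Algebra.FiniteType.isNoetherianRing k R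
  have := hp.1.1
  obtain ⟨g, hgp, hg⟩ := exists_notMem_forall_le_of_mem_minimalPrimes hp
  obtain ⟨m, hm, hpm, hgm⟩ := exists_isMaximal_le_notMem hgp
  let Rₘ := Localization.AtPrime m
  let hₘ : Rₘ := algebraMap R Rₘ h
  have hmem : hₘ ∈ IsLocalRing.maximalIdeal Rₘ := by
    rw [IsLocalization.AtPrime.to_map_mem_maximal_iff Rₘ m]
    exact hpm (hp.1.2 (Ideal.mem_span_singleton_self h))
  have hlocal : ringKrullDim (Rₘ ⧸ Ideal.span {hₘ}) ≤ ringKrullDim (R ⧸ p) := by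
    refine ringKrullDim_quotient_le_of_isLocalization m.primeCompl fun P hP hhP =>
      hg _ inferInstance ?_ fun hgP => hgm ?_
    · rwa [Ideal.span_singleton_le_iff_mem] at hhP ⊢
    · exact (IsLocalization.AtPrime.to_map_mem_maximal_iff Rₘ m g).mp
        (IsLocalRing.le_maximalIdeal hP.ne_top hgP)
  calc ringKrullDim R ≤ m.height := ringKrullDim_le_height_of_isMaximal k m
    _ = (IsLocalRing.maximalIdeal Rₘ).height := by
      rw [IsLocalRing.maximalIdeal_height_eq_ringKrullDim,
        IsLocalization.AtPrime.ringKrullDim_eq_height m Rₘ]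
    _ ≤ ringKrullDim (Rₘ ⧸ Ideal.span {hₘ}) + 1 :=
      Ideal.height_le_ringKrullDim_quotient_add_one hmem
    _ ≤ ringKrullDim (R ⧸ p) + 1 := by gcongr

lemma ringKrullDim_quotient_le_ringKrullDim_quotient_add_one {h : R} {q p : Ideal R} [q.IsPrime]
    (hqp : q ≤ p) (hp : p ∈ (Ideal.span {h}).minimalPrimes) :
    ringKrullDim (R ⧸ q) ≤ ringKrullDim (R ⧸ p) + 1 := by
  have hmin := map_mk_mem_minimalPrimes hqp hp
  rw [Ideal.map_span, Set.image_singleton] at hmin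
  rw [← ringKrullDim_eq_of_ringEquiv (DoubleQuot.quotQuotEquivQuotOfLE hqp)]
  exact ringKrullDim_le_ringKrullDim_quotient_add_one k hmin

end KrullDimension

/-! ### Dimension at a point of a topological space -/

section PointDim

open Topology

variable {X Y : Type*} [TopologicalSpace X] [TopologicalSpace Y]

/-- The dimension of the closure of a point, computed by the chains of specializations starting
at that point. -/
noncomputable def pointDim (x : X) : ℕ∞ :=
  letI := specializationPreorder X
  Order.height x

attribute [local instance] specializationPreorder in
lemma strictMono_of_isInducing {e : X → Y} (he : IsInducing e) : StrictMono e :=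
  fun _ _ hlt => ⟨hlt.1.map he.continuous, fun h => hlt.2 (he.specializes_iff.mp h)⟩

lemma pointDim_le_of_isInducing {e : X → Y} (he : IsInducing e) (x : X) :
    pointDim x ≤ pointDim (e x) :=
  letI := specializationPreorder X
  letI := specializationPreorder Y
  Order.height_le_height_apply_of_strictMono e (strictMono_of_isInducing he) x

lemma pointDim_of_isClosedEmbedding {e : X → Y} (he : IsClosedEmbedding e) (x : X) :
    pointDim (e x) = pointDim x := by
  let _ := specializationPreorder X
  let _ := specializationPreorder Y
  refine (Order.height_eq_of_strictMono e (strictMono_of_isInducing he.isInducing)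
    (fun a b hlt => ?_) x).symm
  obtain ⟨a', rfl⟩ := hlt.1.mem_closed he.isClosed_range (Set.mem_range_self a)
  exact ⟨a', ⟨he.isInducing.specializes_iff.mp hlt.1, fun h => hlt.2 (h.map he.continuous)⟩, rfl⟩

lemma pointDim_add_one_le {x y : X} (hxy : x ⤳ y) (hyx : ¬ y ⤳ x) :
    pointDim y + 1 ≤ pointDim x :=
  letI := specializationPreorder X
  Order.height_add_one_le ⟨hxy, hyx⟩

lemma exists_specializes_not_specializes {x : X} (hx : pointDim x ≠ 0) :
    ∃ y, x ⤳ y ∧ ¬ y ⤳ x := by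
  let _ := specializationPreorder X
  obtain ⟨y, hy⟩ := not_isMin_iff.mp (mt Order.height_eq_zero.mpr hx)
  exact ⟨y, hy.1, hy.2⟩

/- All the members of a chain of specializations lie in every open set containing its last member,
so a chain witnessing `n ≤ pointDim x` can be seen near a single point. -/
lemma exists_specializes_forall_isOpen_le_pointDim {x : X} {n : ℕ} (hn : n ≤ pointDim x) :
    ∃ y, x ⤳ y ∧ ∀ (U : Set X) (hx : x ∈ U), IsOpen U → y ∈ U → n ≤ pointDim (⟨x, hx⟩ : U) := by
  let _ := specializationPreorder X
  obtain ⟨p, hlast, rfl⟩ := Order.exists_series_of_le_height x hn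
  refine ⟨p.head, hlast ▸ LTSeries.head_le_last p, fun U hx hU hy => ?_⟩
  let _ := specializationPreorder U
  have hmem (i) : p i ∈ U := (LTSeries.head_le p i : p i ⤳ p.head).mem_open hU hy
  let q : LTSeries U := ⟨p.length, fun i => ⟨p i, hmem i⟩, fun i =>
    ⟨IsInducing.subtypeVal.specializes_iff.mp (p.step i).1,
      fun h => (p.step i).2 (h.map continuous_subtype_val)⟩⟩
  exact Order.length_le_height_last (p := q) |>.trans_eq
    (congrArg Order.height (Subtype.ext hlast))

variable [T0Space X] [QuasiSober X]

lemma topologicalKrullDim_eq_pointDim {x : X} (hx : ∀ y, x ⤳ y) :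
    topologicalKrullDim X = pointDim x := by
  let _ := specializationOrder X
  have := Nonempty.intro x
  rw [topologicalKrullDim, Order.krullDim_eq_of_orderIso irreducibleSetEquivPoints,
    Order.krullDim_eq_iSup_height_of_nonempty]
  exact congrArg _ (le_antisymm (iSup_le fun y => Order.height_mono (hx y))
    (le_iSup (fun y : X => Order.height y) x))

lemma topologicalKrullDim_closure_singleton (x : X) :
    topologicalKrullDim (closure {x}) = pointDim x := by
  have hclosed : IsClosedEmbedding (Subtype.val : closure {x} → X) :=
    isClosed_closure.isClosedEmbedding_subtypeVal
  have := hclosed.quasiSober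
  rw [topologicalKrullDim_eq_pointDim (x := (⟨x, subset_closure rfl⟩ : closure {x})),
    ← pointDim_of_isClosedEmbedding hclosed]
  exact fun y => hclosed.isInducing.specializes_iff.mp (specializes_iff_mem_closure.mpr y.2)

omit [T0Space X] in
lemma exists_mem_genericPoints_specializes (x : X) : ∃ η ∈ genericPoints X, η ⤳ x := by
  let C : irreducibleComponents X :=
    ⟨irreducibleComponent x, irreducibleComponent_mem_irreducibleComponents x⟩
  exact ⟨_, (genericPoints.ofComponent C).2,
    (genericPoints.isGenericPoint_ofComponent C).specializes mem_irreducibleComponent⟩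

lemma mem_genericPoints_iff {x : X} : x ∈ genericPoints X ↔ ∀ y, y ⤳ x → y = x := by
  refine ⟨fun hx y hyx => (hyx.antisymm ?_).eq, fun hx => ?_⟩
  · exact specializes_iff_closure_subset.mpr
      (hx.2 isIrreducible_singleton.closure hyx.closure_subset)
  · obtain ⟨η, hη, hηx⟩ := exists_mem_genericPoints_specializes x
    exact hx η hηx ▸ hη

lemma forall_topologicalKrullDim_irreducibleComponents_eq_iff {n : ℕ} :
    (∀ C ∈ irreducibleComponents X, topologicalKrullDim C = n) ↔
      ∀ x ∈ genericPoints X, pointDim x = n := by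
  simp only [← WithBot.coe_inj (b := (n : ℕ∞)), ← topologicalKrullDim_closure_singleton]
  refine ⟨fun h x hx => h _ hx, fun h C hC => ?_⟩
  have hgen : closure {(genericPoints.ofComponent ⟨C, hC⟩).1} = C :=
    (genericPoints.isGenericPoint_ofComponent ⟨C, hC⟩).def
  have hdim := h _ (genericPoints.ofComponent ⟨C, hC⟩).2
  rwa [hgen] at hdim

lemma forall_topologicalKrullDim_irreducibleComponents_eq_iff_of_isClosedEmbedding {e : Y → X}
    (he : IsClosedEmbedding e) {n : ℕ} :
    (∀ C ∈ irreducibleComponents Y, topologicalKrullDim C = n) ↔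
      ∀ x ∈ Set.range e, (∀ x' ∈ Set.range e, x' ⤳ x → x' = x) → pointDim x = n := by
  have := he.quasiSober
  have := he.isEmbedding.t0Space
  simp only [forall_topologicalKrullDim_irreducibleComponents_eq_iff, mem_genericPoints_iff,
    Set.forall_mem_range, he.isInducing.specializes_iff, he.injective.eq_iff,
    pointDim_of_isClosedEmbedding he]

end PointDim

/-! ### Dimension of schemes locally of finite type over a field -/

section FiniteTypeOverField

open Topology

lemma pointDim_primeSpectrum {R : Type*} [CommRing R] (p : PrimeSpectrum R) :
    (pointDim p : WithBot ℕ∞) = ringKrullDim (R ⧸ p.asIdeal) := by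
  have hclosed := PrimeSpectrum.isClosedEmbedding_comap_of_surjective _
    (Ideal.Quotient.mk p.asIdeal) Ideal.Quotient.mk_surjective
  have hbot : PrimeSpectrum.comap (Ideal.Quotient.mk p.asIdeal) ⊥ = p :=
    PrimeSpectrum.ext (by
      simp [PrimeSpectrum.comap_asIdeal, PrimeSpectrum.asIdeal_bot, ← RingHom.ker_eq_comap_bot])
  calc (pointDim p : WithBot ℕ∞)
      = pointDim (⊥ : PrimeSpectrum (R ⧸ p.asIdeal)) := by
        rw [← pointDim_of_isClosedEmbedding hclosed, hbot]
    _ = topologicalKrullDim (PrimeSpectrum (R ⧸ p.asIdeal)) :=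
        (topologicalKrullDim_eq_pointDim fun q =>
          (PrimeSpectrum.le_iff_specializes _ _).mp bot_le).symm
    _ = ringKrullDim (R ⧸ p.asIdeal) := PrimeSpectrum.topologicalKrullDim_eq_ringKrullDim _

lemma pointDim_le_pointDim_basicOpen (k : Type*) {R : Type*} [Field k] [CommRing R] [Algebra k R]
    [Algebra.FiniteType k R] {a : R} {p : PrimeSpectrum R} (ha : p ∈ PrimeSpectrum.basicOpen a) :
    pointDim p ≤ pointDim (⟨p, ha⟩ : PrimeSpectrum.basicOpen a) := by
  let π := Ideal.Quotient.mk p.asIdeal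
  let B := Localization.Away (π a)
  have hπa : π a ≠ 0 := fun h => ha (Ideal.Quotient.eq_zero_iff_mem.mp h)
  have : IsDomain B := IsLocalization.isDomain_localization
    (powers_le_nonZeroDivisors_of_noZeroDivisors hπa)
  let φ : R →+* B := (algebraMap _ B).comp π
  have hφ : IsInducing (PrimeSpectrum.comap φ) := by
    rw [PrimeSpectrum.comap_comp]
    exact (PrimeSpectrum.isClosedEmbedding_comap_of_surjective _ π
      Ideal.Quotient.mk_surjective).isInducing.comp
      (PrimeSpectrum.localization_away_isOpenEmbedding B (π a)).isInducing
  have hmem (q : PrimeSpectrum B) : PrimeSpectrum.comap φ q ∈ PrimeSpectrum.basicOpen a :=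
    fun h => q.2.ne_top (Ideal.eq_top_of_isUnit_mem _ h
      (IsLocalization.Away.algebraMap_isUnit (π a)))
  have hbot : PrimeSpectrum.comap φ ⊥ = p := by
    ext r
    change algebraMap _ B (π r) = 0 ↔ r ∈ p.asIdeal
    rw [IsLocalization.to_map_eq_zero_iff B (powers_le_nonZeroDivisors_of_noZeroDivisors hπa),
      Ideal.Quotient.eq_zero_iff_mem]
  have hdim : pointDim p ≤ pointDim (⊥ : PrimeSpectrum B) := by
    rw [← WithBot.coe_le_coe, pointDim_primeSpectrum,
      ← topologicalKrullDim_eq_pointDim fun q => (PrimeSpectrum.le_iff_specializes _ _).mp bot_le,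
      PrimeSpectrum.topologicalKrullDim_eq_ringKrullDim]
    exact ringKrullDim_le_ringKrullDim_localizationAway k hπa B
  refine hdim.trans ((pointDim_le_of_isInducing (hφ.codRestrict hmem) ⊥).trans_eq ?_)
  exact congrArg pointDim (Subtype.ext hbot)

universe u

variable {Y : Scheme.{u}}

lemma fromSpec_mem_basicOpen_iff {U : Y.Opens} (hU : IsAffineOpen U) (a : Γ(Y, U))
    (p : PrimeSpectrum Γ(Y, U)) : hU.fromSpec p ∈ Y.basicOpen a ↔ a ∉ p.asIdeal := by
  change p ∈ hU.fromSpec ⁻¹ᵁ Y.basicOpen a ↔ _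
  rw [hU.fromSpec_preimage_basicOpen]
  rfl

lemma primeIdealOf_asIdeal_le_iff {U : Y.Opens} (hU : IsAffineOpen U) {x y : U} :
    (hU.primeIdealOf x).asIdeal ≤ (hU.primeIdealOf y).asIdeal ↔ (x : Y) ⤳ y := by
  rw [← hU.fromSpec_primeIdealOf x, ← hU.fromSpec_primeIdealOf y]
  exact (PrimeSpectrum.le_iff_specializes _ _).trans
    hU.fromSpec.isOpenEmbedding.isInducing.specializes_iff.symm

/-- A subset of a scheme is locally principal if it is, locally, the zero locus of a single
function. -/
def IsLocallyPrincipal (Z : Set Y) : Prop :=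
  ∀ y : Y, ∃ U : Y.Opens, y ∈ U ∧ ∃ h : Γ(Y, U), ∀ z ∈ U, z ∈ Z ↔ z ∉ Y.basicOpen h

variable {Z : Set Y}

lemma IsLocallyPrincipal.preimage (hZ : IsLocallyPrincipal Z) {X : Scheme.{u}} (e : X ⟶ Y) :
    IsLocallyPrincipal (e ⁻¹' Z) := by
  intro x
  obtain ⟨U, hxU, h, hU⟩ := hZ (e x)
  refine ⟨e ⁻¹ᵁ U, hxU, e.app U h, fun z hz => (hU _ hz).trans ?_⟩
  rw [← Scheme.preimage_basicOpen]
  rfl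

lemma IsLocallyPrincipal.exists_isAffineOpen (hZ : IsLocallyPrincipal Z) (y : Y) :
    ∃ U : Y.Opens, IsAffineOpen U ∧ y ∈ U ∧
      ∃ h : Γ(Y, U), ∀ z ∈ U, z ∈ Z ↔ z ∉ Y.basicOpen h := by
  obtain ⟨U, hyU, h, hU⟩ := hZ y
  obtain ⟨W, hW, hyW, hWU⟩ := exists_isAffineOpen_mem_and_subset hyU
  refine ⟨W, hW, hyW, res Y hWU h, fun z hz => ?_⟩
  have hres : Y.basicOpen (res Y hWU h) = W ⊓ Y.basicOpen h := Y.basicOpen_res h (homOfLE hWU).op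
  rw [hU z (hWU hz), hres]
  exact not_congr ⟨fun hzh => ⟨hz, hzh⟩, fun hzh => hzh.2⟩

lemma IsLocallyPrincipal.isClosed (hZ : IsLocallyPrincipal Z) : IsClosed Z := by
  refine isOpen_compl_iff.mp (isOpen_iff_forall_mem_open.mpr fun y hy => ?_)
  obtain ⟨U, hyU, h, hU⟩ := hZ y
  refine ⟨Y.basicOpen h, fun z hz hzZ => (hU z (Y.basicOpen_le h hz)).mp hzZ hz,
    (Y.basicOpen h).isOpen, ?_⟩
  exact not_not.mp (mt (hU y hyU).mpr hy)

lemma primeIdealOf_mem_minimalPrimes {U : Y.Opens} (hU : IsAffineOpen U) {h : Γ(Y, U)}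
    (hZ : ∀ z ∈ U, z ∈ Z ↔ z ∉ Y.basicOpen h) {y : Y} (hyU : y ∈ U) (hy : y ∈ Z)
    (hmin : ∀ z ∈ Z, z ⤳ y → z = y) :
    (hU.primeIdealOf ⟨y, hyU⟩).asIdeal ∈ (Ideal.span {h}).minimalPrimes := by
  have hmem (p : PrimeSpectrum Γ(Y, U)) : hU.fromSpec p ∈ Z ↔ h ∈ p.asIdeal := by
    rw [hZ _ (hU.range_fromSpec.subset (Set.mem_range_self p)), fromSpec_mem_basicOpen_iff,
      not_not]
  have hpy := hU.fromSpec_primeIdealOf ⟨y, hyU⟩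
  refine ⟨⟨(hU.primeIdealOf ⟨y, hyU⟩).2, ?_⟩, fun P ⟨hP, hhP⟩ hle => ?_⟩
  · rwa [Ideal.span_singleton_le_iff_mem, ← hmem, hpy]
  · have hspec : hU.fromSpec ⟨P, hP⟩ ⤳ hU.fromSpec (hU.primeIdealOf ⟨y, hyU⟩) :=
      ((PrimeSpectrum.le_iff_specializes ⟨P, hP⟩ _).mp hle).map
        hU.fromSpec.isOpenEmbedding.continuous
    have heq := hmin _ ((hmem ⟨P, hP⟩).mpr ((Ideal.span_singleton_le_iff_mem _).mp hhP))
      (hspec.trans (specializes_of_eq hpy))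
    exact (congrArg PrimeSpectrum.asIdeal
      (hU.fromSpec.isOpenEmbedding.injective (heq.trans hpy.symm))).ge

variable {k : Type u} [Field k] (g : Y ⟶ Spec (.of k)) [LocallyOfFiniteType g]

include g

lemma exists_algebra_finiteType {U : Y.Opens} (hU : IsAffineOpen U) :
    ∃ _ : Algebra k Γ(Y, U), Algebra.FiniteType k Γ(Y, U) := by
  have hft := g.finiteType_appLE (isAffineOpen_top _) hU le_top
  let φ : k →+* Γ(Y, U) := (g.appLE ⊤ U le_top).hom.comp (Scheme.ΓSpecIso (.of k)).inv.hom
  have hφ : φ.FiniteType := hft.comp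
    (RingHom.FiniteType.of_surjective _
      (Scheme.ΓSpecIso (.of k)).commRingCatIsoToRingEquiv.symm.surjective)
  exact ⟨φ.toAlgebra, hφ⟩

lemma pointDim_primeIdealOf_le {U W : Y.Opens} (hW : IsAffineOpen W) {y : Y} (hyW : y ∈ W)
    (hyU : y ∈ U) : pointDim (hW.primeIdealOf ⟨y, hyW⟩) ≤ pointDim (⟨y, hyU⟩ : U) := by
  obtain ⟨a, hle, hya⟩ := hW.exists_basicOpen_le ⟨y, hyU⟩ hyW
  obtain ⟨_, _⟩ := exists_algebra_finiteType g hW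
  have hap : hW.primeIdealOf ⟨y, hyW⟩ ∈ PrimeSpectrum.basicOpen a :=
    (fromSpec_mem_basicOpen_iff hW a _).mp (by rwa [hW.fromSpec_primeIdealOf])
  have hmem (p : PrimeSpectrum.basicOpen a) : hW.fromSpec p.1 ∈ (U : Set Y) :=
    hle ((fromSpec_mem_basicOpen_iff hW a p).mpr p.2)
  have hind : IsInducing fun p : PrimeSpectrum.basicOpen a => hW.fromSpec p.1 :=
    hW.fromSpec.isOpenEmbedding.isInducing.comp .subtypeVal
  refine (pointDim_le_pointDim_basicOpen k hap).trans
    ((pointDim_le_of_isInducing (hind.codRestrict hmem) _).trans_eq ?_)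
  exact congrArg pointDim (Subtype.ext (hW.fromSpec_primeIdealOf _))

lemma pointDim_eq_pointDim_primeIdealOf {U : Y.Opens} (hU : IsAffineOpen U) {y : Y} (hy : y ∈ U) :
    pointDim y = pointDim (hU.primeIdealOf ⟨y, hy⟩) := by
  have hle {W : Y.Opens} (hW : IsAffineOpen W) (hyW : y ∈ W) :
      pointDim (⟨y, hyW⟩ : W) ≤ pointDim (hW.primeIdealOf ⟨y, hyW⟩) :=
    pointDim_le_of_isInducing hW.isoSpec.hom.homeomorph.isInducing _
  refine le_antisymm (ENat.forall_natCast_le_iff_le.mp fun n hn => ?_) ?_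
  · obtain ⟨z, hyz, hz⟩ := exists_specializes_forall_isOpen_le_pointDim hn
    obtain ⟨W, hW, hzW, -⟩ := exists_isAffineOpen_mem_and_subset (Opens.mem_top z)
    have hyW : y ∈ W := hyz.mem_open W.isOpen hzW
    calc (n : ℕ∞) ≤ pointDim (⟨y, hyW⟩ : W) := hz W hyW W.isOpen hzW
      _ ≤ pointDim (hW.primeIdealOf ⟨y, hyW⟩) := hle hW hyW
      _ ≤ pointDim (⟨y, hy⟩ : U) := pointDim_primeIdealOf_le g hW hyW hy
      _ ≤ pointDim (hU.primeIdealOf ⟨y, hy⟩) := hle hU hy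
  · exact (pointDim_le_of_isInducing hU.fromSpec.isOpenEmbedding.isInducing _).trans_eq
      (congrArg pointDim (hU.fromSpec_primeIdealOf _))

lemma coe_pointDim_eq_ringKrullDim {U : Y.Opens} (hU : IsAffineOpen U) {y : Y} (hy : y ∈ U) :
    (pointDim y : WithBot ℕ∞) = ringKrullDim (Γ(Y, U) ⧸ (hU.primeIdealOf ⟨y, hy⟩).asIdeal) := by
  rw [pointDim_eq_pointDim_primeIdealOf g hU hy, pointDim_primeSpectrum]

theorem pointDim_add_one_eq_of_isLocallyPrincipal {d : ℕ∞}
    (hdim : ∀ η ∈ genericPoints Y, pointDim η = d) (hZ : IsLocallyPrincipal Z)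
    (hgen : ∀ η ∈ genericPoints Y, η ∉ Z) {y : Y} (hy : y ∈ Z)
    (hmin : ∀ z ∈ Z, z ⤳ y → z = y) : pointDim y + 1 = d := by
  obtain ⟨η, hη, hηy⟩ := exists_mem_genericPoints_specializes y
  rw [← hdim η hη]
  refine le_antisymm (pointDim_add_one_le hηy fun hyη => ?_) ?_
  · exact hgen η hη ((hηy.antisymm hyη).eq ▸ hy)
  · obtain ⟨U, hU, hyU, h, hZU⟩ := hZ.exists_isAffineOpen y
    have hηU : η ∈ U := hηy.mem_open U.isOpen hyU
    obtain ⟨_, _⟩ := exists_algebra_finiteType g hU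
    rw [← WithBot.coe_le_coe, WithBot.coe_add, coe_pointDim_eq_ringKrullDim g hU hηU,
      coe_pointDim_eq_ringKrullDim g hU hyU]
    exact ringKrullDim_quotient_le_ringKrullDim_quotient_add_one k
      ((primeIdealOf_asIdeal_le_iff hU).mpr hηy)
      (primeIdealOf_mem_minimalPrimes hU hZU hyU hy hmin)

end FiniteTypeOverField

/-! ### Relative dimension of a locally principal subset -/

section RelativeDimension

open Topology

variable {X S : Scheme} (f : X ⟶ S)

/-- The points of `X` that are generic points of irreducible components of fibres of `f`. -/
def fibreGenericPoints : Set X := {x | ∀ x', x' ⤳ x → f x' = f x → x' = x}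

variable {f}

lemma fiberι_mem_fibreGenericPoints_iff {s : S} {η : f.fiber s} :
    f.fiberι s η ∈ fibreGenericPoints f ↔ η ∈ genericPoints (f.fiber s) := by
  have hι := (f.fiberι s).isEmbedding
  have hfη (y : f.fiber s) : f (f.fiberι s y) = s :=
    (f.range_fiberι s).subset (Set.mem_range_self y)
  rw [mem_genericPoints_iff]
  refine ⟨fun hη y hy => hι.injective (hη _ (hy.map hι.continuous) ((hfη y).trans (hfη η).symm)),
    fun hη x' hx' hfx' => ?_⟩
  obtain ⟨y, rfl⟩ := (f.range_fiberι s).superset (hfx'.trans (hfη η))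
  rw [hη y (hι.isInducing.specializes_iff.mp hx')]

lemma PureRelativeDimension.pointDim_eq {d : ℕ} (hf : PureRelativeDimension f d) {s : S}
    {η : f.fiber s} (hη : η ∈ genericPoints (f.fiber s)) : pointDim η = d := by
  have hclosed := (f.fiberHomeo s).symm.isClosedEmbedding
  refine (forall_topologicalKrullDim_irreducibleComponents_eq_iff_of_isClosedEmbedding
    hclosed).mp (hf s) η ((f.fiberHomeo s).symm.surjective η) fun y _ => ?_
  exact mem_genericPoints_iff.mp hη y

lemma PureRelativeDimension.exists_specializes_ne {d : ℕ} (hf : PureRelativeDimension f d)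
    (hd : d ≠ 0) {x : X} (hx : x ∈ fibreGenericPoints f) : ∃ y, x ⤳ y ∧ y ≠ x ∧ f y = f x := by
  generalize hs : f x = s
  obtain ⟨η, rfl⟩ := (f.range_fiberι s).superset hs
  have hdim : pointDim η ≠ 0 := by
    rw [hf.pointDim_eq (fiberι_mem_fibreGenericPoints_iff.mp hx)]
    exact_mod_cast hd
  obtain ⟨y, hηy, hyη⟩ := exists_specializes_not_specializes hdim
  refine ⟨f.fiberι s y, hηy.map (f.fiberι s).continuous, fun h => hyη ?_,
    (f.range_fiberι s).subset (Set.mem_range_self y)⟩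
  exact specializes_of_eq ((f.fiberι s).isEmbedding.injective h)

lemma exists_isClosedEmbedding_fiber {Z : Set X} (hZ : IsClosed Z) (s : S) :
    ∃ e : ↥(Z ∩ f.base ⁻¹' {s}) → f.fiber s,
      IsClosedEmbedding e ∧ Set.range e = f.fiberι s ⁻¹' Z := by
  have hrange : Set.range (Set.inclusion (Set.inter_subset_right : Z ∩ f.base ⁻¹' {s} ⊆ _)) =
      Subtype.val ⁻¹' Z := by
    ext x
    simp [Set.range_inclusion]
  refine ⟨(f.fiberHomeo s).symm ∘ Set.inclusion Set.inter_subset_right,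
    (f.fiberHomeo s).symm.isClosedEmbedding.comp ⟨.inclusion _, ?_⟩, ?_⟩
  · rw [hrange]
    exact hZ.preimage continuous_subtype_val
  · rw [Set.range_comp, hrange, (f.fiberHomeo s).symm.image_eq_preimage_symm]
    rfl

theorem PureRelativeDimension.topologicalKrullDim_eq_of_isLocallyPrincipal
    [LocallyOfFiniteType f] {d : ℕ} (hf : PureRelativeDimension f d) {Z : Set X}
    (hZ : IsLocallyPrincipal Z) (hgen : ∀ x ∈ fibreGenericPoints f, x ∉ Z) (s : S) :
    ∀ C ∈ irreducibleComponents ↥(Z ∩ f.base ⁻¹' {s}),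
      topologicalKrullDim C = ((d - 1 : ℕ) : WithBot ℕ∞) := by
  obtain ⟨e, hclosed, hrange⟩ := exists_isClosedEmbedding_fiber hZ.isClosed s
  rw [forall_topologicalKrullDim_irreducibleComponents_eq_iff_of_isClosedEmbedding hclosed, hrange]
  intro y hy hmin
  have : LocallyOfFiniteType (f.fiberToSpecResidueField s) :=
    inferInstanceAs (LocallyOfFiniteType (Limits.pullback.snd f (S.fromSpecResidueField s)))
  have hdim : pointDim y + 1 = d := pointDim_add_one_eq_of_isLocallyPrincipal
    (k := S.residueField s) (f.fiberToSpecResidueField s) (fun η => hf.pointDim_eq) (hZ.preimage _)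
    (fun η hη => hgen _ (fiberι_mem_fibreGenericPoints_iff.mpr hη)) hy hmin
  rw [ENat.natCast_sub, ← hdim]
  exact ((ENat.addLECancellable_natCast 1).add_tsub_cancel_right).symm

end RelativeDimension

/-! ### Valuation rings over a relatively algebraically closed subfield -/

section RelAlgClosure

open Polynomial

variable {A K : Type*} [CommRing A] [Field K] (θ : A →+* K)

/-- The subfield of `K` of the elements that are algebraic over the image of `θ`. -/
noncomputable def relAlgClosure : Subfield K where
  carrier := {a | IsAlgebraic θ.range a}
  mul_mem' := IsAlgebraic.mul
  one_mem' := isAlgebraic_one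
  add_mem' := IsAlgebraic.add
  zero_mem' := isAlgebraic_zero
  neg_mem' := IsAlgebraic.neg
  inv_mem' := fun _ => IsAlgebraic.inv

lemma apply_mem_relAlgClosure (a : A) : θ a ∈ relAlgClosure θ :=
  isAlgebraic_algebraMap (⟨θ a, a, rfl⟩ : θ.range)

variable {θ}

lemma mem_relAlgClosure_of_isAlgebraic {y : K} (hy : IsAlgebraic (relAlgClosure θ) y) :
    y ∈ relAlgClosure θ := by
  let Ω : Subalgebra θ.range K :=
    { (relAlgClosure θ).toSubring with
      algebraMap_mem' := fun r => isAlgebraic_algebraMap r }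
  have : Algebra.IsAlgebraic θ.range Ω :=
    ⟨fun a => (isAlgebraic_algebraMap_iff (A := K) Subtype.val_injective).mp a.2⟩
  exact (show IsAlgebraic Ω y from hy).restrictScalars θ.range

lemma mem_relAlgClosure_iff {a : K} :
    a ∈ relAlgClosure θ ↔ ∃ p : A[X], p.map θ ≠ 0 ∧ p.eval₂ θ a = 0 := by
  have hsurj := Polynomial.map_surjective θ.rangeRestrict θ.rangeRestrict_surjective
  have hmap (p : A[X]) : p.map θ = (p.map θ.rangeRestrict).map θ.range.subtype := by
    rw [Polynomial.map_map]
    rfl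
  change (∃ p : θ.range[X], p ≠ 0 ∧ aeval a p = 0) ↔ _
  rw [hsurj.exists]
  refine exists_congr fun p => and_congr (not_congr ?_) ?_
  · rw [hmap, Polynomial.map_eq_zero_iff (f := θ.range.subtype) Subtype.val_injective]
  · rw [aeval_def, eval₂_map]
    rfl

lemma exists_coeff_zero_ne_zero_of_mem_relAlgClosure {a : K} (ha : a ∈ relAlgClosure θ)
    (ha0 : a ≠ 0) : ∃ p : A[X], θ (p.coeff 0) ≠ 0 ∧ p.eval₂ θ a = 0 := by
  obtain ⟨q, hq0, hqa⟩ := IsAlgebraic.exists_nonzero_coeff_and_aeval_eq_zero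
    (show IsAlgebraic θ.range a from ha) (mem_nonZeroDivisors_of_ne_zero ha0)
  obtain ⟨p, rfl⟩ := Polynomial.map_surjective θ.rangeRestrict θ.rangeRestrict_surjective q
  refine ⟨p, fun h => hq0 (Subtype.ext ?_), ?_⟩
  · rwa [coeff_map]
  · rw [aeval_def, eval₂_map] at hqa
    exact hqa

variable (θ) in
lemma isIntegrallyClosedIn_relAlgClosure :
    IsIntegrallyClosedIn (relAlgClosure θ).toSubring K :=
  isIntegrallyClosedIn_iff.mpr ⟨Subtype.val_injective, fun hx =>
    ⟨⟨_, mem_relAlgClosure_of_isAlgebraic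
      (show IsIntegral (relAlgClosure θ) _ from hx).isAlgebraic⟩, rfl⟩⟩

lemma mem_relAlgClosure_of_forall_valuationSubring {a : K}
    (h : ∀ V : ValuationSubring K, (∀ b ∈ relAlgClosure θ, b ∈ V) → a ∈ V) :
    a ∈ relAlgClosure θ := by
  have := isIntegrallyClosedIn_relAlgClosure θ
  by_contra ha
  obtain ⟨V, hV, haV⟩ := Subring.exists_le_valuationSubring_of_isIntegrallyClosedIn
    (R := (relAlgClosure θ).toSubring) ha
  exact haV (h V hV)

end RelAlgClosure

/-! ### Centres of valuation rings of residue fields -/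

section Centre

open IsLocalRing

universe u

variable {X S : Scheme.{u}}

lemma germ_stalkClosedPointTo {R : CommRingCat.{u}} [IsLocalRing R] (ℓ : Spec R ⟶ X)
    {U : X.Opens} (hU : ℓ (closedPoint R) ∈ U) :
    X.presheaf.germ U _ hU ≫ Scheme.stalkClosedPointTo ℓ =
      ℓ.appLE U ⊤ (Scheme.preimage_eq_top_of_closedPoint_mem ℓ hU).ge ≫
        (Scheme.ΓSpecIso R).hom := by
  rw [Scheme.germ_stalkClosedPointTo]
  simp only [Iso.trans_hom, Scheme.Hom.appLE, Category.assoc]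
  rfl

lemma germ_stalkClosedPointTo_of_specMap_comp_eq {R K : CommRingCat.{u}} [IsLocalRing R]
    [IsLocalRing K] {α : R ⟶ K} {ℓ : Spec R ⟶ X} {g : Spec K ⟶ X} (hg : Spec.map α ≫ ℓ = g)
    {U : X.Opens} (hU : ℓ (closedPoint R) ∈ U) (hU' : g (closedPoint K) ∈ U) :
    X.presheaf.germ U _ hU ≫ Scheme.stalkClosedPointTo ℓ ≫ α =
      X.presheaf.germ U _ hU' ≫ Scheme.stalkClosedPointTo g := by
  subst hg
  have happ : (Spec.map α).appTop = (Spec.map α).appLE ⊤ ⊤ le_top :=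
    (Scheme.Hom.appLE_eq_app _).symm
  rw [← Category.assoc, germ_stalkClosedPointTo ℓ hU, germ_stalkClosedPointTo _ hU',
    Category.assoc, ← Scheme.ΓSpecIso_naturality, ← Category.assoc, happ]
  exact congrArg (· ≫ (Scheme.ΓSpecIso K).hom) (Scheme.Hom.appLE_comp_appLE _ _ _ _ _ _ _)

lemma stalkClosedPointTo_germ_eq_evaluation {x : X} {R : CommRingCat.{u}} [IsLocalRing R]
    {α : R ⟶ X.residueField x} {ℓ : Spec R ⟶ X}
    (hℓ : Spec.map α ≫ ℓ = X.fromSpecResidueField x) {U : X.Opens}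
    (hz : ℓ (closedPoint R) ∈ U) (hx : x ∈ U) (a : Γ(X, U)) :
    α (Scheme.stalkClosedPointTo ℓ (X.presheaf.germ U _ hz a)) = X.evaluation U x hx a := by
  have hx' : X.fromSpecResidueField x (closedPoint (X.residueField x)) ∈ U :=
    Set.mem_of_eq_of_mem (Scheme.fromSpecResidueField_apply x _) hx
  have : IsLocalHom (X.residue x).hom :=
    inferInstanceAs (IsLocalHom (IsLocalRing.residue (X.presheaf.stalk x)))
  exact congrArg (fun φ => φ.hom a) ((germ_stalkClosedPointTo_of_specMap_comp_eq hℓ hz hx').trans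
    (Scheme.germ_stalkClosedPointTo_Spec_fromSpecStalk (X.residue x) U hx'))

/-- `z` is a centre on `X` of a valuation ring `V` of the residue field of `x`: it is the image of
the closed point under a morphism from `Spec V` extending `Spec κ(x) ⟶ X`. This is expressed by
the comparison of the values at `x` of functions defined near `z` with `V`. -/
structure IsCentre {x : X} (V : ValuationSubring (X.residueField x)) (z : X) : Prop where
  specializes : x ⤳ z
  evaluation_mem {U : X.Opens} (hz : z ∈ U) (hx : x ∈ U) (a : Γ(X, U)) :
    X.evaluation U x hx a ∈ V
  mem_basicOpen_iff {U : X.Opens} (hz : z ∈ U) (hx : x ∈ U) (a : Γ(X, U)) :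
    z ∈ X.basicOpen a ↔ X.evaluation U x hx a ≠ 0 ∧ (X.evaluation U x hx a)⁻¹ ∈ V

lemma IsCentre.mem_basicOpen_of_div_mem {x z : X} {V : ValuationSubring (X.residueField x)}
    (hz : IsCentre V z) {U : X.Opens} (hzU : z ∈ U) (hxU : x ∈ U) {a b : Γ(X, U)}
    (hb : z ∈ X.basicOpen b) (ha : X.evaluation U x hxU a ≠ 0)
    (hdiv : X.evaluation U x hxU b / X.evaluation U x hxU a ∈ V) : z ∈ X.basicOpen a := by
  obtain ⟨hne, hinv⟩ := (hz.mem_basicOpen_iff hzU hxU b).mp hb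
  refine (hz.mem_basicOpen_iff hzU hxU a).mpr ⟨ha, ?_⟩
  have hmul := V.mul_mem _ _ hinv hdiv
  rwa [← mul_div_assoc, inv_mul_cancel₀ hne, one_div] at hmul

lemma isCentre_closedPoint {x : X} {V : ValuationSubring (X.residueField x)}
    {ℓ : Spec (.of V) ⟶ X}
    (hℓ : Spec.map (CommRingCat.ofHom (algebraMap V (X.residueField x))) ≫ ℓ =
      X.fromSpecResidueField x) : IsCentre V (ℓ (closedPoint V)) where
  specializes := by
    have hx := Scheme.fromSpecResidueField_apply x (closedPoint (X.residueField x))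
    rw [← hℓ] at hx
    exact (specializes_of_eq hx.symm).trans ((specializes_closedPoint _).map ℓ.continuous)
  evaluation_mem hz hx a := by
    rw [← stalkClosedPointTo_germ_eq_evaluation hℓ hz hx a]
    exact Subtype.property (p := fun y => y ∈ V) _
  mem_basicOpen_iff hz hx a := by
    rw [← stalkClosedPointTo_germ_eq_evaluation hℓ hz hx a, Scheme.mem_basicOpen _ _ _ hz,
      ← isUnit_map_iff (Scheme.stalkClosedPointTo ℓ).hom]
    generalize (Scheme.stalkClosedPointTo ℓ).hom _ = v
    have hv := not_congr ((V.coe_mem_nonunits_iff (a := v)).symm.trans V.mem_nonunits_iff_or)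
    rw [mem_maximalIdeal, mem_nonunits_iff, not_not, not_or, not_not] at hv
    exact hv

/-- Evaluation at `x` of the functions pulled back from the base. -/
noncomputable def baseEvaluation (f : X ⟶ S) (x : X) : Γ(S, ⊤) →+* X.residueField x :=
  (f.appTop ≫ X.Γevaluation x).hom

/-- The field of constants at `x`: the relative algebraic closure of the residue field of `f x` in
that of `x`, as long as `S` is affine. -/
noncomputable abbrev constField (f : X ⟶ S) (x : X) : Subfield (X.residueField x) :=
  relAlgClosure (baseEvaluation f x)

variable (f : X ⟶ S) (x : X)

lemma baseEvaluation_ne_zero_iff (a : Γ(S, ⊤)) :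
    baseEvaluation f x a ≠ 0 ↔ f x ∈ S.basicOpen a := by
  change X.Γevaluation x (f.appTop a) ≠ 0 ↔ _
  rw [← Scheme.Γevaluation_naturality_apply,
    ← Scheme.evaluation_ne_zero_iff_mem_basicOpen S (U := ⊤) (f x) trivial]
  exact not_congr (map_eq_zero_iff (f.residueFieldMap x).hom (f.residueFieldMap x).hom.injective)

lemma specializes_of_forall_mem_basicOpen [IsAffine S] {s t : S}
    (h : ∀ a : Γ(S, ⊤), t ∈ S.basicOpen a → s ∈ S.basicOpen a) : s ⤳ t := by
  refine specializes_iff_forall_open.mpr fun U hU ht => ?_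
  obtain ⟨_, ⟨_, ⟨a, rfl⟩, rfl⟩, hta, haU⟩ :=
    (isBasis_basicOpen S).exists_subset_of_mem_open ht hU
  exact haU (h a hta)

lemma eq_of_forall_mem_basicOpen_iff [IsAffine S] {s t : S}
    (h : ∀ a : Γ(S, ⊤), s ∈ S.basicOpen a ↔ t ∈ S.basicOpen a) : s = t :=
  ((specializes_of_forall_mem_basicOpen fun a => (h a).mpr).antisymm
    (specializes_of_forall_mem_basicOpen fun a => (h a).mp)).eq

lemma fromSpecResidueField_comp_eq [IsAffine S] :
    X.fromSpecResidueField x ≫ f =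
      Spec.map (CommRingCat.ofHom (baseEvaluation f x)) ≫ S.isoSpec.inv := by
  have hnat : f ≫ S.isoSpec.hom = X.toSpecΓ ≫ Spec.map f.appTop := Scheme.toSpecΓ_naturality f
  have heval : X.fromSpecResidueField x ≫ X.toSpecΓ = Spec.map (X.Γevaluation x) := by
    simp only [Scheme.fromSpecResidueField, Category.assoc, Scheme.fromSpecStalk_toSpecΓ,
      ← Spec.map_comp]
    rfl
  rw [Iso.eq_comp_inv, Category.assoc, hnat, reassoc_of% heval, ← Spec.map_comp]
  rfl

theorem exists_isCentre [IsAffine S] [IsProper f] {V : ValuationSubring (X.residueField x)}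
    (hV : ∀ a ∈ constField f x, a ∈ V) : ∃ z, IsCentre V z ∧ f z = f x := by
  have hval : ValuativeCriterion f := by
    have hf : IsProper f := inferInstance
    rw [IsProper.eq_valuativeCriterion] at hf
    exact hf.1.1.1
  let θ : Γ(S, ⊤) →+* V := (baseEvaluation f x).codRestrict V.toSubring
    fun a => hV _ (apply_mem_relAlgClosure _ a)
  let sq : ValuativeCommSq f :=
    { R := V
      K := X.residueField x
      i₁ := X.fromSpecResidueField x
      i₂ := Spec.map (CommRingCat.ofHom θ) ≫ S.isoSpec.inv
      commSq := ⟨by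
        rw [fromSpecResidueField_comp_eq, ← Spec.map_comp_assoc]
        rfl⟩ }
  obtain ⟨ℓ, hℓ, -⟩ := (hval.existence sq).exists_lift
  have hz := isCentre_closedPoint hℓ
  refine ⟨_, hz, eq_of_forall_mem_basicOpen_iff fun a => ?_⟩
  have hpre : ℓ (closedPoint V) ∈ X.basicOpen (f.appTop a) ↔
      f (ℓ (closedPoint V)) ∈ S.basicOpen a := by
    rw [← Scheme.preimage_basicOpen_top f a]
    rfl
  rw [← baseEvaluation_ne_zero_iff f x, ← hpre, hz.mem_basicOpen_iff (U := ⊤) trivial trivial]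
  exact and_iff_left (hV _ ((constField f x).inv_mem (apply_mem_relAlgClosure _ a)))

end Centre

/-! ### Sections of the powers of a line bundle -/

section Sections

variable {X S : Scheme}

section Restriction

variable {U V : X.Opens} (h : V ≤ U)

lemma res_add (a b : Γ(X, U)) : res X h (a + b) = res X h a + res X h b :=
  map_add (X.presheaf.map (homOfLE h).op).hom a b

lemma res_neg (a : Γ(X, U)) : res X h (-a) = -res X h a :=
  map_neg (X.presheaf.map (homOfLE h).op).hom a

lemma res_mul (a b : Γ(X, U)) : res X h (a * b) = res X h a * res X h b :=
  map_mul (X.presheaf.map (homOfLE h).op).hom a b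

lemma res_pow (a : Γ(X, U)) (n : ℕ) : res X h (a ^ n) = res X h a ^ n :=
  map_pow (X.presheaf.map (homOfLE h).op).hom a n

lemma res_zero : res X h 0 = 0 :=
  map_zero (X.presheaf.map (homOfLE h).op).hom

lemma res_one : res X h 1 = 1 :=
  map_one (X.presheaf.map (homOfLE h).op).hom

lemma res_res {W : X.Opens} (h' : W ≤ V) (a : Γ(X, U)) :
    res X h' (res X h a) = res X (h'.trans h) a := by
  unfold res
  rw [← CommRingCat.comp_apply, ← Functor.map_comp]
  rfl

lemma germ_res {x : X} (hx : x ∈ V) (a : Γ(X, U)) :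
    X.presheaf.germ V x hx (res X h a) = X.presheaf.germ U x (h hx) a :=
  X.presheaf.germ_res_apply (homOfLE h) x hx a

lemma evaluation_res {x : X} (hx : x ∈ V) (a : Γ(X, U)) :
    X.evaluation V x hx (res X h a) = X.evaluation U x (h hx) a :=
  congrArg (X.residue x) (germ_res h hx a)

lemma evaluation_appLE (f : X ⟶ S) {x : X} (hx : x ∈ V) (a : Γ(S, ⊤)) :
    X.evaluation V x hx (f.appLE ⊤ V le_top a) = baseEvaluation f x a :=
  evaluation_res (U := ⊤) le_top hx (f.appTop a)

lemma isUnit_germ_iff {x : X} (hx : x ∈ U) {a : Γ(X, U)} :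
    IsUnit (X.presheaf.germ U x hx a) ↔ X.evaluation U x hx a ≠ 0 := by
  rw [Scheme.evaluation_ne_zero_iff_mem_basicOpen, Scheme.mem_basicOpen _ _ _ hx]

end Restriction

variable {L : LineBundle X}

lemma LineBundle.evaluation_g_ne_zero {i j : L.ι} {x : X} (hi : x ∈ L.U i) (hj : x ∈ L.U j) :
    X.evaluation (L.U i ⊓ L.U j) x ⟨hi, hj⟩ (L.g i j) ≠ 0 :=
  ((L.isUnit i j).map (X.evaluation _ x _).hom).ne_zero

variable (L) in
/-- The families of functions on the trivializing open sets that define global sections of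
`L^{⊗n}`. -/
def homogeneousSections (n : ℕ) : AddSubgroup (∀ i, Γ(X, L.U i)) where
  carrier := {F | ∀ i j, res X (inf_le_left : L.U i ⊓ L.U j ≤ L.U i) (F i) =
    L.g i j ^ n * res X inf_le_right (F j)}
  zero_mem' i j := by simp only [Pi.zero_apply, res_zero, mul_zero]
  add_mem' hF hG i j := by rw [Pi.add_apply, Pi.add_apply, res_add, res_add, hF, hG, mul_add]
  neg_mem' hF i j := by rw [Pi.neg_apply, Pi.neg_apply, res_neg, res_neg, hF, mul_neg]

instance : SetLike.GradedMonoid (homogeneousSections L) where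
  one_mem i j := by rw [Pi.one_apply, Pi.one_apply, res_one, res_one, pow_zero, mul_one]
  mul_mem n m F G hF hG i j := by
    rw [Pi.mul_apply, Pi.mul_apply, res_mul, res_mul, hF i j, hG i j, pow_add, mul_mul_mul_comm]

lemma LineBundle.GSection.mem_homogeneousSections (T : L.GSection) :
    T.s ∈ homogeneousSections L 1 := fun i j => by
  rw [pow_one]
  exact T.compat i j

section HomogeneousSections

variable {n : ℕ} {F : ∀ i, Γ(X, L.U i)} (hF : F ∈ homogeneousSections L n)

include hF

lemma evaluation_eq_pow_mul_evaluation {i j : L.ι} {x : X} (hi : x ∈ L.U i) (hj : x ∈ L.U j) :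
    X.evaluation _ x hi (F i) =
      X.evaluation (L.U i ⊓ L.U j) x ⟨hi, hj⟩ (L.g i j) ^ n * X.evaluation _ x hj (F j) := by
  have hij : x ∈ L.U i ⊓ L.U j := ⟨hi, hj⟩
  have heval := congrArg (X.evaluation _ x hij) (hF i j)
  rwa [map_mul, map_pow, evaluation_res, evaluation_res] at heval

lemma evaluation_ne_zero_iff_of_mem {i j : L.ι} {x : X} (hi : x ∈ L.U i) (hj : x ∈ L.U j) :
    X.evaluation _ x hi (F i) ≠ 0 ↔ X.evaluation _ x hj (F j) ≠ 0 := by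
  rw [evaluation_eq_pow_mul_evaluation hF hi hj, mul_ne_zero_iff,
    and_iff_right (pow_ne_zero _ (LineBundle.evaluation_g_ne_zero hi hj))]

lemma evaluation_div_evaluation_eq {G : ∀ i, Γ(X, L.U i)} (hG : G ∈ homogeneousSections L n)
    {i j : L.ι} {x : X} (hi : x ∈ L.U i) (hj : x ∈ L.U j) :
    X.evaluation _ x hi (F i) / X.evaluation _ x hi (G i) =
      X.evaluation _ x hj (F j) / X.evaluation _ x hj (G j) := by
  rw [evaluation_eq_pow_mul_evaluation hF hi hj, evaluation_eq_pow_mul_evaluation hG hi hj,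
    mul_div_mul_left _ _ (pow_ne_zero _ (LineBundle.evaluation_g_ne_zero hi hj))]

end HomogeneousSections

section PowSectionOn

variable {n : ℕ} {V : X.Opens} (t : L.PowSectionOn n V) {i j : L.ι} {x : X} (hV : x ∈ V)
  (hi : x ∈ L.U i) (hj : x ∈ L.U j)

lemma LineBundle.PowSectionOn.germ_eq_pow_mul_germ :
    X.presheaf.germ (V ⊓ L.U i) x ⟨hV, hi⟩ (t.s i) =
      X.presheaf.germ (L.U i ⊓ L.U j) x ⟨hi, hj⟩ (L.g i j) ^ n *
        X.presheaf.germ (V ⊓ L.U j) x ⟨hV, hj⟩ (t.s j) := by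
  have hx : x ∈ V ⊓ (L.U i ⊓ L.U j) := ⟨hV, hi, hj⟩
  have hgerm := congrArg (X.presheaf.germ _ x hx) (t.compat i j)
  rwa [map_mul, map_pow, germ_res, germ_res, germ_res] at hgerm

lemma LineBundle.PowSectionOn.evaluation_eq_pow_mul_evaluation :
    X.evaluation (V ⊓ L.U i) x ⟨hV, hi⟩ (t.s i) =
      X.evaluation (L.U i ⊓ L.U j) x ⟨hi, hj⟩ (L.g i j) ^ n *
        X.evaluation (V ⊓ L.U j) x ⟨hV, hj⟩ (t.s j) := by
  have hgerm := congrArg (X.residue x) (t.germ_eq_pow_mul_germ hV hi hj)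
  rwa [map_mul, map_pow] at hgerm

lemma LineBundle.PowSectionOn.evaluation_div_evaluation_pow_eq {T : ∀ i, Γ(X, L.U i)}
    (hT : T ∈ homogeneousSections L 1) :
    X.evaluation (V ⊓ L.U i) x ⟨hV, hi⟩ (t.s i) / X.evaluation _ x hi (T i) ^ n =
      X.evaluation (V ⊓ L.U j) x ⟨hV, hj⟩ (t.s j) / X.evaluation _ x hj (T j) ^ n := by
  rw [t.evaluation_eq_pow_mul_evaluation hV hi hj, Paper.evaluation_eq_pow_mul_evaluation hT hi hj,
    pow_one, mul_pow, mul_div_mul_left _ _ (pow_ne_zero _ (LineBundle.evaluation_g_ne_zero hi hj))]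

lemma LineBundle.PowSectionOn.mem_unitLocus_iff :
    x ∈ t.unitLocus ↔ X.evaluation (V ⊓ L.U i) x ⟨hV, hi⟩ (t.s i) ≠ 0 := by
  refine ⟨fun ⟨j, _, hj, hunit⟩ => ?_, fun h => ⟨i, hV, hi, (isUnit_germ_iff _).mpr h⟩⟩
  rw [t.evaluation_eq_pow_mul_evaluation hV hi hj]
  exact mul_ne_zero (pow_ne_zero _ (LineBundle.evaluation_g_ne_zero hi hj))
    ((isUnit_germ_iff (U := V ⊓ L.U j) _).mp hunit)

lemma LineBundle.PowSectionOn.mem_zeroLocus_iff (t : L.PowSectionOn n ⊤) :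
    x ∈ t.zeroLocus ↔ X.evaluation (⊤ ⊓ L.U i) x ⟨trivial, hi⟩ (t.s i) = 0 := by
  rw [← not_iff_not, ← ne_eq, ← t.mem_unitLocus_iff trivial hi]
  simp [LineBundle.PowSectionOn.zeroLocus, LineBundle.PowSectionOn.unitLocus]

lemma LineBundle.PowSectionOn.isLocallyPrincipal_zeroLocus (t : L.PowSectionOn n ⊤) :
    IsLocallyPrincipal t.zeroLocus := fun y => by
  obtain ⟨i, hi⟩ := L.covers y
  refine ⟨⊤ ⊓ L.U i, ⟨trivial, hi⟩, t.s i, fun z hz => ?_⟩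
  rw [t.mem_zeroLocus_iff hz.2]
  exact Scheme.evaluation_eq_zero_iff_notMem_basicOpen X z hz _

end PowSectionOn

/-- The global section of `L^{⊗n}` defined by an element of `homogeneousSections L n`. -/
noncomputable def powSectionOfMem {n : ℕ} {F : ∀ i, Γ(X, L.U i)}
    (hF : F ∈ homogeneousSections L n) : L.PowSectionOn n ⊤ where
  s i := res X inf_le_right (F i)
  compat i j := by
    have hres := congrArg (res X (inf_le_right : ⊤ ⊓ (L.U i ⊓ L.U j) ≤ L.U i ⊓ L.U j)) (hF i j)
    rw [res_mul, res_pow, res_res, res_res] at hres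
    rwa [res_res, res_res]

lemma mem_zeroLocus_powSectionOfMem_iff {n : ℕ} {F : ∀ i, Γ(X, L.U i)}
    (hF : F ∈ homogeneousSections L n) {i : L.ι} {x : X} (hi : x ∈ L.U i) :
    x ∈ (powSectionOfMem hF).zeroLocus ↔ X.evaluation _ x hi (F i) = 0 := by
  rw [(powSectionOfMem hF).mem_zeroLocus_iff hi]
  exact iff_of_eq (congrArg (· = 0) (evaluation_res inf_le_right (V := ⊤ ⊓ L.U i) _ (F i)))

end Sections

/-! ### A specialization in the fibre produces non-constant ratios of sections -/

section Positivity

open Polynomial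

variable {X S : Scheme} {f : X ⟶ S} {x y z : X}

lemma exists_evaluation_notMem_constField {O : X.Opens} (hO : IsAffineOpen O) (hxO : x ∈ O)
    (hyO : y ∈ O) (hxy : x ⤳ y) (hne : y ≠ x) (hf : f y = f x) :
    ∃ b : Γ(X, O), X.evaluation O x hxO b ∉ constField f x := by
  have hx : x ∉ closure {y} :=
    fun h => hne ((specializes_iff_mem_closure.mpr h).antisymm hxy).eq
  obtain ⟨b, hbO, hxb⟩ := hO.exists_basicOpen_le
    (V := ⟨(closure {y})ᶜ, isClosed_closure.isOpen_compl⟩) ⟨x, hx⟩ hxO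
  have hyb : X.evaluation O y hyO b = 0 :=
    (X.evaluation_eq_zero_iff_notMem_basicOpen y hyO b).mpr fun h => hbO h (subset_closure rfl)
  refine ⟨b, fun hb => ?_⟩
  obtain ⟨p, hp0, hpb⟩ := exists_coeff_zero_ne_zero_of_mem_relAlgClosure hb
    ((X.evaluation_ne_zero_iff_mem_basicOpen x hxO b).mpr hxb)
  have heval (w : X) (hw : w ∈ O) :
      X.evaluation O w hw (p.eval₂ (f.appLE ⊤ O le_top).hom b) =
        p.eval₂ (baseEvaluation f w) (X.evaluation O w hw b) :=
    (p.hom_eval₂ _ (X.evaluation O w hw).hom b).trans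
      (congrArg (p.eval₂ · _) (RingHom.ext (evaluation_appLE f hw)))
  have hxp : x ∉ X.basicOpen (p.eval₂ (f.appLE ⊤ O le_top).hom b) := by
    rw [← X.evaluation_eq_zero_iff_notMem_basicOpen x hxO, heval, hpb]
  have hyp : y ∉ X.basicOpen (p.eval₂ (f.appLE ⊤ O le_top).hom b) :=
    fun h => hxp (hxy.mem_open (X.basicOpen _).isOpen h)
  rw [← X.evaluation_eq_zero_iff_notMem_basicOpen y hyO, heval, hyb, eval₂_at_zero] at hyp
  rw [baseEvaluation_ne_zero_iff, ← hf, ← baseEvaluation_ne_zero_iff] at hp0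
  exact hp0 hyp

variable {L : LineBundle X} {T : ∀ i, Γ(X, L.U i)} {V : ValuationSubring (X.residueField x)}

section Centre

variable {n : ℕ} {W : X.Opens} (t : L.PowSectionOn n W) (hz : IsCentre V z) (hzW : z ∈ W)
  (hT : T ∈ homogeneousSections L 1) (hzT : ∃ i, z ∈ X.basicOpen (T i)) {i : L.ι}
  (hxW : x ∈ W) (hxi : x ∈ L.U i)

include hz hzW hT hzT

lemma IsCentre.evaluation_div_pow_mem :
    X.evaluation (W ⊓ L.U i) x ⟨hxW, hxi⟩ (t.s i) / X.evaluation _ x hxi (T i) ^ n ∈ V := by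
  obtain ⟨j, hzj⟩ := hzT
  have hzj' := X.basicOpen_le _ hzj
  have hxj := hz.specializes.mem_open (L.U j).isOpen hzj'
  obtain ⟨-, hinv⟩ := (hz.mem_basicOpen_iff hzj' hxj _).mp hzj
  rw [t.evaluation_div_evaluation_pow_eq hxW hxi hxj hT, div_eq_mul_inv, ← inv_pow]
  exact V.mul_mem _ _ (hz.evaluation_mem (U := W ⊓ L.U j) ⟨hzW, hzj'⟩ ⟨hxW, hxj⟩ _)
    (pow_mem hinv n)

lemma IsCentre.mem_unitLocus (hxt : x ∈ t.unitLocus)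
    (hmem : (X.evaluation (W ⊓ L.U i) x ⟨hxW, hxi⟩ (t.s i) /
      X.evaluation _ x hxi (T i) ^ n)⁻¹ ∈ V) : z ∈ t.unitLocus := by
  obtain ⟨j, hzj⟩ := hzT
  have hzj' := X.basicOpen_le _ hzj
  have hxj := hz.specializes.mem_open (L.U j).isOpen hzj'
  obtain ⟨hne, hinv⟩ := (hz.mem_basicOpen_iff hzj' hxj _).mp hzj
  rw [t.evaluation_div_evaluation_pow_eq hxW hxi hxj hT, inv_div] at hmem
  have hmul := V.mul_mem _ _ (pow_mem hinv n) hmem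
  rw [inv_pow, ← mul_div_assoc, inv_mul_cancel₀ (pow_ne_zero n hne), one_div] at hmul
  have hzt := (hz.mem_basicOpen_iff (U := W ⊓ L.U j) ⟨hzW, hzj'⟩ ⟨hxW, hxj⟩ (t.s j)).mpr
    ⟨(t.mem_unitLocus_iff hxW hxj).mp hxt, hmul⟩
  exact ⟨j, hzW, hzj', (Scheme.mem_basicOpen _ _ _ _).mp hzt⟩

end Centre

/- Otherwise the centre of every valuation ring of `κ(x)` containing the constants lies in an affine
open set `X_t` containing `x` and `y`, so all functions on `X_t` take constant values at `x`. -/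
theorem exists_evaluation_div_notMem_constField [IsAffine S] [IsProper f]
    (hample : IsRelativelyAmple f L) {gens : Set (∀ i, Γ(X, L.U i))}
    (hmem : ∀ T ∈ gens, T ∈ homogeneousSections L 1)
    (hgen : ∀ (i : L.ι) (x : X) (hx : x ∈ L.U i), ∃ T ∈ gens, X.evaluation _ x hx (T i) ≠ 0)
    (hxy : x ⤳ y) (hne : y ≠ x) (hf : f y = f x) {i : L.ι} (hi : x ∈ L.U i) :
    ∃ T ∈ gens, ∃ T' ∈ gens, X.evaluation _ x hi (T' i) ≠ 0 ∧
      X.evaluation _ x hi (T i) / X.evaluation _ x hi (T' i) ∉ constField f x := by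
  by_contra! hconst
  obtain ⟨W, -, hyW, n, -, t, ho, hyt, hO⟩ := hample y
  have hxt : x ∈ t.unitLocus := hxy.mem_open ho hyt
  have hxW : x ∈ f ⁻¹ᵁ W := (congrArg (· ∈ W) hf).mp hyW
  obtain ⟨T, hT, hTx⟩ := hgen i x hi
  have hcentre (V : ValuationSubring (X.residueField x)) (hV : ∀ a ∈ constField f x, a ∈ V) :
      ∃ z, IsCentre V z ∧ z ∈ f ⁻¹ᵁ W ∧ ∃ j, z ∈ X.basicOpen (T j) := by
    obtain ⟨z, hz, hfz⟩ := exists_isCentre f x hV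
    obtain ⟨j, hzj⟩ := L.covers z
    have hxj := hz.specializes.mem_open (L.U j).isOpen hzj
    obtain ⟨T', hT', hzT'⟩ := hgen j z hzj
    refine ⟨z, hz, (congrArg (· ∈ W) hfz).mpr hxW, j, hz.mem_basicOpen_of_div_mem hzj hxj
      ((X.evaluation_ne_zero_iff_mem_basicOpen z hzj _).mp hzT')
      ((evaluation_ne_zero_iff_of_mem (hmem T hT) hi hxj).mp hTx) (hV _ ?_)⟩
    rw [← evaluation_div_evaluation_eq (hmem T' hT') (hmem T hT) hi hxj]
    exact hconst T' hT' T hT hTx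
  have hratio : X.evaluation (f ⁻¹ᵁ W ⊓ L.U i) x ⟨hxW, hi⟩ (t.s i) /
      X.evaluation _ x hi (T i) ^ n ∈ constField f x := by
    refine mem_relAlgClosure_of_forall_valuationSubring fun V hV => ?_
    obtain ⟨z, hz, hzW, hzT⟩ := hcentre V hV
    exact hz.evaluation_div_pow_mem t hzW (hmem T hT) hzT hxW hi
  obtain ⟨b, hb⟩ := exists_evaluation_notMem_constField hO hxt hyt hxy hne hf
  refine hb (mem_relAlgClosure_of_forall_valuationSubring fun V hV => ?_)
  obtain ⟨z, hz, hzW, hzT⟩ := hcentre V hV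
  exact hz.evaluation_mem (hz.mem_unitLocus t hzW (hmem T hT) hzT hxW hi hxt
    (hV _ (inv_mem hratio))) hxt b

end Positivity

/-! ### Constants at the generic points of the fibres -/

section Bound

open Polynomial Filter

variable {X S : Scheme} {D : X.Opens}

lemma isMinimalInFibre_ker_evaluation [IsAffine S] {f : X ⟶ S} (hD : IsAffineOpen D) {x : X}
    (hx : x ∈ D) (hgen : x ∈ fibreGenericPoints f) :
    letI := (f.appLE ⊤ D le_top).hom.toAlgebra
    IsMinimalInFibre Γ(S, ⊤) (RingHom.ker (X.evaluation D x hx).hom) := by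
  let := (f.appLE ⊤ D le_top).hom.toAlgebra
  refine isMinimalInFibre_iff.mpr ⟨RingHom.ker_isPrime _, fun q hq hle hunder => ?_⟩
  let y : X := hD.fromSpec (⟨q, hq⟩ : PrimeSpectrum Γ(X, D))
  have hyD : y ∈ D := hD.range_fromSpec.subset (Set.mem_range_self _)
  have hy (a : Γ(X, D)) : X.evaluation D y hyD a ≠ 0 ↔ a ∉ q := by
    rw [X.evaluation_ne_zero_iff_mem_basicOpen]
    exact fromSpec_mem_basicOpen_iff hD a _
  have hyx : y ⤳ x := by
    refine specializes_iff_forall_open.mpr fun U hU hxU => ?_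
    obtain ⟨b, hbU, hxb⟩ := hD.exists_basicOpen_le (V := ⟨U, hU⟩) ⟨x, hxU⟩ hx
    refine hbU ((X.evaluation_ne_zero_iff_mem_basicOpen y hyD b).mp ((hy b).mpr fun h => ?_))
    exact (X.evaluation_ne_zero_iff_mem_basicOpen x hx b).mpr hxb (hle h)
  have hfyx : f y = f x := by
    refine eq_of_forall_mem_basicOpen_iff fun a => ?_
    rw [← baseEvaluation_ne_zero_iff, ← baseEvaluation_ne_zero_iff, ← evaluation_appLE f hyD,
      ← evaluation_appLE f hx, hy]
    exact not_congr ⟨fun h => hle h, fun h => hunder h⟩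
  have hyx_eq : y = x := hgen y hyx hfyx
  refine hle.antisymm fun a ha => ?_
  by_contra haq
  refine (X.evaluation_ne_zero_iff_mem_basicOpen x hx a).mpr ?_ ha
  exact hyx_eq ▸ (X.evaluation_ne_zero_iff_mem_basicOpen y hyD a).mp ((hy a).mpr haq)

lemma isAlgebraicModulo_ker_evaluation_iff (f : X ⟶ S) {x : X} (hx : x ∈ D) (b : Γ(X, D)) :
    letI := (f.appLE ⊤ D le_top).hom.toAlgebra
    IsAlgebraicModulo Γ(S, ⊤) (RingHom.ker (X.evaluation D x hx).hom) b ↔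
      X.evaluation D x hx b ∈ constField f x := by
  let := (f.appLE ⊤ D le_top).hom.toAlgebra
  have hcomp : (X.evaluation D x hx).hom.comp (algebraMap Γ(S, ⊤) Γ(X, D)) = baseEvaluation f x :=
    RingHom.ext (evaluation_appLE f hx)
  rw [mem_relAlgClosure_iff]
  refine exists_congr fun p => and_congr ?_ ?_
  · rw [Ne, Polynomial.ext_iff, not_forall]
    refine exists_congr fun i => not_congr ?_
    rw [coeff_map, coeff_zero, ← hcomp]
    rfl
  · rw [RingHom.mem_ker, aeval_def, hom_eval₂, hcomp]

variable [IsAffine S] [IsNoetherian S] (f : X ⟶ S) [LocallyOfFiniteType f]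

lemma eventually_evaluation_mem_constField_of_pow_add (hD : IsAffineOpen D) (u g : Γ(X, D)) :
    ∀ᶠ n in atTop, ∀ x ∈ fibreGenericPoints f, ∀ hx : x ∈ D,
      X.evaluation D x hx u ^ n + X.evaluation D x hx g ∈ constField f x →
        X.evaluation D x hx u ∈ constField f x := by
  let := (f.appLE ⊤ D le_top).hom.toAlgebra
  have : IsNoetherianRing Γ(S, ⊤) :=
    IsLocallyNoetherian.component_noetherian ⟨⊤, isAffineOpen_top S⟩
  have : Algebra.FiniteType Γ(S, ⊤) Γ(X, D) := f.finiteType_appLE (isAffineOpen_top S) hD le_top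
  filter_upwards [eventually_isAlgebraicModulo_of_pow_add (A := Γ(S, ⊤)) u g] with n hn x hgen hx
  rw [← map_pow, ← map_add, ← isAlgebraicModulo_ker_evaluation_iff f hx,
    ← isAlgebraicModulo_ker_evaluation_iff f hx]
  exact hn _ (isMinimalInFibre_ker_evaluation hD hx hgen)

lemma eventually_evaluation_div_mem_constField (hD : IsAffineOpen D) (a h c : Γ(X, D)) (b : ℕ) :
    ∀ᶠ n in atTop, ∀ x ∈ fibreGenericPoints f, ∀ hx : x ∈ D, X.evaluation D x hx h ≠ 0 →
      (X.evaluation D x hx a / X.evaluation D x hx h) ^ n +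
        X.evaluation D x hx c / X.evaluation D x hx h ^ b ∈ constField f x →
        X.evaluation D x hx a / X.evaluation D x hx h ∈ constField f x := by
  have hle := X.basicOpen_le h
  obtain ⟨v, hv⟩ : ∃ v, v * res X hle h = 1 :=
    (RingedSpace.isUnit_res_basicOpen _ h).exists_left_inv
  filter_upwards [eventually_evaluation_mem_constField_of_pow_add f (hD.basicOpen h)
    (res X hle a * v) (res X hle c * v ^ b)] with n hn x hgen hx hxh
  have hxh' : x ∈ X.basicOpen h := (X.evaluation_ne_zero_iff_mem_basicOpen x hx h).mp hxh
  have hinv : X.evaluation _ x hxh' v = (X.evaluation D x hx h)⁻¹ := by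
    refine eq_inv_of_mul_eq_one_left ?_
    rw [← evaluation_res hle hxh', ← map_mul, hv, map_one]
  simpa only [map_mul, map_pow, evaluation_res, hinv, div_eq_mul_inv, inv_pow] using
    hn x hgen hxh'

end Bound

/-! ### Sections avoiding the associated points and the generic points of the fibres -/

section Avoidance

open Filter

variable {X S : Scheme}

lemma LineBundle.exists_finite_isAffineOpen_cover [CompactSpace X] (L : LineBundle X) :
    ∃ 𝒱 : Set X.Opens, 𝒱.Finite ∧ (∀ V ∈ 𝒱, IsAffineOpen V ∧ ∃ i, V ≤ L.U i) ∧
      ∀ x, ∃ V ∈ 𝒱, x ∈ V := by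
  have hlocal (x : X) : ∃ V : X.Opens, (IsAffineOpen V ∧ ∃ i, V ≤ L.U i) ∧ x ∈ V := by
    obtain ⟨i, hi⟩ := L.covers x
    obtain ⟨V, hV, hxV, hle⟩ := exists_isAffineOpen_mem_and_subset hi
    exact ⟨V, ⟨hV, i, hle⟩, hxV⟩
  choose V hV hxV using hlocal
  obtain ⟨s, hs⟩ := isCompact_univ.elim_finite_subcover (fun x => (V x : Set X))
    (fun x => (V x).isOpen) fun x _ => Set.mem_iUnion.mpr ⟨x, hxV x⟩
  refine ⟨V '' s, s.finite_toSet.image V, Set.forall_mem_image.mpr fun x _ => hV x, fun x => ?_⟩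
  obtain ⟨y, hy, hxy⟩ := Set.mem_iUnion₂.mp (hs (Set.mem_univ x))
  exact ⟨V y, Set.mem_image_of_mem V hy, hxy⟩

section Regular

variable {V : X.Opens}

lemma germ_mem_nonZeroDivisors (hV : IsAffineOpen V) {a : Γ(X, V)}
    (ha : a ∈ nonZeroDivisors Γ(X, V)) {x : X} (hx : x ∈ V) :
    X.presheaf.germ V x hx a ∈ nonZeroDivisors (X.presheaf.stalk x) := by
  let := (X.presheaf.germ V x hx).hom.toAlgebra
  have : IsLocalization.AtPrime (X.presheaf.stalk x) (hV.primeIdealOf ⟨x, hx⟩).asIdeal :=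
    hV.isLocalization_stalk ⟨x, hx⟩
  exact IsLocalization.nonZeroDivisors_le_comap
    (hV.primeIdealOf ⟨x, hx⟩).asIdeal.primeCompl (X.presheaf.stalk x) ha

lemma exists_finite_forall_mem_nonZeroDivisors [IsLocallyNoetherian X] (hV : IsAffineOpen V) :
    ∃ A : Set X, A.Finite ∧ A ⊆ V ∧
      ∀ a : Γ(X, V), (∀ x ∈ A, x ∈ X.basicOpen a) → a ∈ nonZeroDivisors Γ(X, V) := by
  have : IsNoetherianRing Γ(X, V) := IsLocallyNoetherian.component_noetherian ⟨V, hV⟩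
  let assocPoints : Set (PrimeSpectrum Γ(X, V)) :=
    PrimeSpectrum.asIdeal ⁻¹' associatedPrimes Γ(X, V) Γ(X, V)
  have hfin : assocPoints.Finite := (associatedPrimes.finite _ _).preimage
    fun _ _ _ _ => PrimeSpectrum.ext
  refine ⟨hV.fromSpec '' assocPoints, hfin.image _, ?_, fun a ha => ?_⟩
  · exact (Set.image_subset_range _ _).trans hV.range_fromSpec.subset
  · by_contra hzd
    rw [← SetLike.mem_coe, ← Set.mem_compl_iff,
      ← biUnion_associatedPrimes_eq_compl_nonZeroDivisors] at hzd
    obtain ⟨P, hP, haP⟩ := Set.mem_iUnion₂.mp hzd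
    let p : PrimeSpectrum Γ(X, V) := ⟨P, hP.isPrime⟩
    exact (fromSpec_mem_basicOpen_iff hV a p).mp (ha _ (Set.mem_image_of_mem _ hP)) haP

theorem LineBundle.exists_finset_forall_isRegular [IsNoetherian X] (L : LineBundle X) :
    ∃ A : Finset X, ∀ {n : ℕ} (t : L.PowSectionOn n ⊤),
      (∀ x ∈ A, x ∉ t.zeroLocus) → t.IsRegular := by
  obtain ⟨𝒱, hfin, h𝒱, hcover⟩ := L.exists_finite_isAffineOpen_cover
  choose! A hAfin hAV hA using fun V (hV : V ∈ 𝒱) =>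
    exists_finite_forall_mem_nonZeroDivisors (h𝒱 V hV).1
  refine ⟨(hfin.biUnion hAfin).toFinset, fun {n} t ht i x _ hi => ?_⟩
  obtain ⟨V, hV, hxV⟩ := hcover x
  obtain ⟨hVaff, j, hle⟩ := h𝒱 V hV
  have hle' : V ≤ ⊤ ⊓ L.U j := le_inf le_top hle
  have hnzd : res X hle' (t.s j) ∈ nonZeroDivisors Γ(X, V) := by
    refine hA V hV _ fun y hy => ?_
    have hyV := hAV V hV hy
    have hyt := ht y ((Set.Finite.mem_toFinset _).mpr (Set.mem_biUnion hV hy))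
    rwa [t.mem_zeroLocus_iff (hle hyV), ← evaluation_res hle' hyV, ← ne_eq,
      X.evaluation_ne_zero_iff_mem_basicOpen] at hyt
  have hgerm := germ_mem_nonZeroDivisors hVaff hnzd hxV
  rw [germ_res] at hgerm
  rw [t.germ_eq_pow_mul_germ trivial hi (hle hxV)]
  exact mul_mem (pow_mem ((L.isUnit i j).map (X.presheaf.germ _ x _).hom).mem_nonZeroDivisors n)
    hgerm

end Regular

variable [CompactSpace X] [IsAffine S] [IsNoetherian S] (f : X ⟶ S) {L : LineBundle X}

lemma eventually_div_mem_constField_of_mem_homogeneousSections [LocallyOfFiniteType f] {m b : ℕ}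
    {P F G : ∀ i, Γ(X, L.U i)} (hP : P ∈ homogeneousSections L m)
    (hF : F ∈ homogeneousSections L m) (hG : G ∈ homogeneousSections L (b * m)) :
    ∀ᶠ n in atTop, ∀ x ∈ fibreGenericPoints f, ∀ (i : L.ι) (hi : x ∈ L.U i),
      X.evaluation _ x hi (F i) ≠ 0 →
      (X.evaluation _ x hi (P i) / X.evaluation _ x hi (F i)) ^ n +
        X.evaluation _ x hi (G i) / X.evaluation _ x hi (F i) ^ b ∈ constField f x →
      X.evaluation _ x hi (P i) / X.evaluation _ x hi (F i) ∈ constField f x := by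
  obtain ⟨𝒱, hfin, h𝒱, hcover⟩ := L.exists_finite_isAffineOpen_cover
  have : Finite 𝒱 := hfin.to_subtype
  choose haff j hle using h𝒱
  have hbound (V : 𝒱) := eventually_evaluation_div_mem_constField f (haff V V.2)
    (res X (hle V V.2) (P (j V V.2))) (res X (hle V V.2) (F (j V V.2)))
    (res X (hle V V.2) (G (j V V.2))) b
  filter_upwards [eventually_all.mpr hbound] with n hn x hgen i hi
  obtain ⟨V, hV, hxV⟩ := hcover x
  have hpow : F ^ b ∈ homogeneousSections L (b * m) := SetLike.pow_mem_graded b hF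
  have hGF := evaluation_div_evaluation_eq hG hpow hi (hle V hV hxV)
  rw [Pi.pow_apply, Pi.pow_apply, map_pow, map_pow] at hGF
  rw [evaluation_ne_zero_iff_of_mem hF hi (hle V hV hxV),
    evaluation_div_evaluation_eq hP hF hi (hle V hV hxV), hGF]
  simpa only [evaluation_res] using hn ⟨V, hV⟩ x hgen hxV

variable [IsProper f]

/-- The homogeneous sections of a relatively ample line bundle generated by the sections in `gens`,
to be evaluated at the points of `X` in chosen trivializations, with the generic points of the
fibres of `f` as the points to be avoided. -/
noncomputable def sectionAvoidanceData {d : ℕ} (hd : d ≠ 0) (hdim : PureRelativeDimension f d)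
    (hample : IsRelativelyAmple f L) (gens : Finset (∀ i, Γ(X, L.U i)))
    (hmem : ∀ T ∈ gens, T ∈ homogeneousSections L 1)
    (hgen : ∀ (i : L.ι) (x : X) (hx : x ∈ L.U i), ∃ T ∈ gens, X.evaluation _ x hx (T i) ≠ 0) :
    AvoidanceData (homogeneousSections L) fun x => X.residueField x where
  eval x := (X.evaluation _ x (L.covers x).choose_spec).hom.comp
    (Pi.evalRingHom (fun i => Γ(X, L.U i)) (L.covers x).choose)
  generic := fibreGenericPoints f
  const := constField f
  mem_const_of_isAlgebraic _ _ := mem_relAlgClosure_of_isAlgebraic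
  eventually_div_mem_const hP hF hG := by
    filter_upwards [eventually_div_mem_constField_of_mem_homogeneousSections f hP hF hG]
      with n hn x hx
    exact hn x hx _ _
  gens := gens
  mem_of_mem_gens := hmem
  exists_eval_ne_zero x := hgen _ x _
  exists_div_notMem_const x hx := by
    obtain ⟨y, hxy, hne, hfy⟩ := hdim.exists_specializes_ne hd hx
    exact exists_evaluation_div_notMem_constField hample hmem hgen hxy hne hfy _

theorem eventually_exists_forall_notMem_zeroLocus {d : ℕ} (hd : d ≠ 0)
    (hdim : PureRelativeDimension f d) (hample : IsRelativelyAmple f L)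
    (hgg : ∃ (r : ℕ) (t : Fin r → L.GSection), ∀ (i : L.ι) (x : X) (hx : x ∈ L.U i),
      ∃ k, IsUnit (X.presheaf.germ (L.U i) x hx ((t k).s i))) (A : Finset X) :
    ∀ᶠ n in atTop, ∃ t : L.PowSectionOn n ⊤,
      (∀ x ∈ fibreGenericPoints f, x ∉ t.zeroLocus) ∧ ∀ x ∈ A, x ∉ t.zeroLocus := by
  classical
  obtain ⟨r, T, hT⟩ := hgg
  let 𝒟 := sectionAvoidanceData f hd hdim hample (Finset.univ.image fun k => (T k).s)
    (by simp [LineBundle.GSection.mem_homogeneousSections])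
    (fun i x hx => by simpa [isUnit_germ_iff] using hT i x hx)
  filter_upwards [𝒟.eventually_exists_forall_eval_ne_zero A] with n ⟨F, hF, hgeneric, hA⟩
  have hzero (x : X) (hx : 𝒟.eval x F ≠ 0) : x ∉ (powSectionOfMem hF).zeroLocus :=
    mt (mem_zeroLocus_powSectionOfMem_iff hF (L.covers x).choose_spec).mp hx
  exact ⟨powSectionOfMem hF, fun x hx => hzero x (hgeneric x hx), fun x hx => hzero x (hA x hx)⟩

end Avoidance

theorem stmt_19_general {X S : Scheme} [IsNoetherian X] [IsNoetherian S] [IsAffine S]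
    (f : X ⟶ S) [IsProper f] (d : ℕ) (hd : 1 ≤ d) (hdim : PureRelativeDimension f d)
    (L : LineBundle X) (hample : IsRelativelyAmple f L)
    (hgg : ∃ (r : ℕ) (t : Fin r → L.GSection), ∀ (i : L.ι) (x : X) (hx : x ∈ L.U i),
      ∃ k, IsUnit (X.presheaf.germ (L.U i) x hx ((t k).s i))) :
    ∃ n₀ : ℕ, 0 < n₀ ∧ ∀ n : ℕ, n₀ ≤ n →
      ∃ t : L.PowSectionOn n ⊤,
        t.IsRegular ∧
        ∀ s : S, ∀ C ∈ irreducibleComponents (↥(t.zeroLocus ∩ f.base ⁻¹' {s})),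
          topologicalKrullDim (↥C) = ((d - 1 : ℕ) : WithBot ℕ∞) := by
  obtain ⟨A, hA⟩ := L.exists_finset_forall_isRegular
  have havoid := eventually_exists_forall_notMem_zeroLocus f (by lia) hdim hample hgg A
  obtain ⟨n₀, hn₀⟩ := Filter.eventually_atTop.mp havoid
  refine ⟨n₀ + 1, n₀.succ_pos, fun n hn => ?_⟩
  obtain ⟨t, hgeneric, htA⟩ := hn₀ n (by lia)
  exact ⟨t, hA t htA,
    hdim.topologicalKrullDim_eq_of_isLocallyPrincipal t.isLocallyPrincipal_zeroLocus hgeneric⟩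

/-- Let `f : X → S` be a surjective projective morphism of Noetherian
schemes of pure relative dimension `d ≥ 1` with `S` affine, and let `L` be an `f`-very ample
invertible `O_X`-module (recorded here as: `L` is relatively ample for `f` and generated by
finitely many global sections).  Then there exists `n₀ > 0` such that for all `n ≥ n₀` there
is a regular global section `s` of `L^{⊗n}` whose zero scheme `Z(s) → S` is of pure relative
dimension `d - 1`. -/
theorem stmt_19 {X S : Scheme}
    [AlgebraicGeometry.IsNoetherian X] [AlgebraicGeometry.IsNoetherian S] [IsAffine S]
    (f : X ⟶ S) (hproj : IsProjectiveMorphism f) (hsurj : Function.Surjective f.base)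
    (d : ℕ) (hd : 1 ≤ d) (hdim : PureRelativeDimension f d)
    (L : LineBundle X)
    (hample : IsRelativelyAmple f L)
    (hgg : ∃ (r : ℕ) (t : Fin r → L.GSection), ∀ (i : L.ι) (x : X) (hx : x ∈ L.U i),
      ∃ k, IsUnit (X.presheaf.germ (L.U i) x hx ((t k).s i))) :
    ∃ n₀ : ℕ, 0 < n₀ ∧ ∀ n : ℕ, n₀ ≤ n →
      ∃ t : L.PowSectionOn n ⊤,
        t.IsRegular ∧
        ∀ s : S, ∀ C ∈ irreducibleComponents (↥(t.zeroLocus ∩ f.base ⁻¹' {s})),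
          topologicalKrullDim (↥C) = ((d - 1 : ℕ) : WithBot ℕ∞) := by
  have := hproj.1
  exact stmt_19_general f d hd hdim L hample hgg

end Paper
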